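/- arXiv:1612.06335 — 3 statements merged into one kernel-verified Lean document; each statement's English description precedes it below -/
import Mathlib

section
/- Let n > t ≥ 0 be integers and let C ⊆ {0,1}^n be a set of binary words of length n with |C| ≥ 2. Then the following are equivalent: (1) every common subsequence of any two distinct codewords of C has length at most n−t−1; (2) C is decodable under up to t deletions, i.e., no two distinct codewords of C have a common subsequence of length at least n−t; (3) C is decodable under up to t insertions, i.e., no two distinct codewords of C have a common supersequence of length at most n+t; (4) C is decodable under up to t combined insertions and deletions, i.e., there is no word z and distinct x, y ∈ C such that z is obtainable from each of x and y by a total of at most t insertions and deletions (z is obtainable from x by a total of at most t insertions and deletions means there exists a word w with w a subsequence of x, w a subsequence of z, and (|x|−|w|) + (|z|−|w|) ≤ t). -/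
/-!
The longest common subsequence and the shortest common supersequence of two words `x`, `y` have
lengths adding up to `|x| + |y|`: `x` and `y` can be merged along a common subsequence, and two
subsequences of a word `z` overlap in at least `|x| + |y| - |z|` letters. For words of length `n`
this exchanges common subsequences of length at least `n - t` with common supersequences of length
at most `n + t`.

The same overlap estimate, applied to the letters of `z` surviving from `x` and from `y`, is the
triangle inequality for insertions and deletions. So if `z` is within `t` operations of both `x`
and `y`, then `x` and `y` are within `2 * t` operations of each other. Words of equal length need
as many deletions as insertions, hence at most `t` letters of each are lost.
-/

section CommonSublist

open scoped List

variable {α : Type*} {w x y z : List α} {m n s t : ℕ}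

theorem exists_common_sublist_of_common_superlist (hx : x <+ z) (hy : y <+ z) :
    ∃ w, w <+ x ∧ w <+ y ∧ x.length + y.length ≤ w.length + z.length := by
  induction hx generalizing y with
  | slnil => exact ⟨[], List.Sublist.refl _, List.nil_sublist _, by simpa using hy.length_le⟩
  | cons a _ ih =>
    cases hy with
    | cons _ hy =>
      obtain ⟨w, hwx, hwy, hlen⟩ := ih hy
      exact ⟨w, hwx, hwy, by grind⟩
    | cons_cons _ hy =>
      obtain ⟨w, hwx, hwy, hlen⟩ := ih hy
      exact ⟨w, hwx, hwy.cons a, by grind⟩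
  | cons_cons a _ ih =>
    cases hy with
    | cons _ hy =>
      obtain ⟨w, hwx, hwy, hlen⟩ := ih hy
      exact ⟨w, hwx.cons a, hwy, by grind⟩
    | cons_cons _ hy =>
      obtain ⟨w, hwx, hwy, hlen⟩ := ih hy
      exact ⟨a :: w, hwx.cons_cons a, hwy.cons_cons a, by grind⟩

theorem exists_common_superlist_of_common_sublist (hx : w <+ x) (hy : w <+ y) :
    ∃ z, x <+ z ∧ y <+ z ∧ z.length + w.length ≤ x.length + y.length := by
  induction hx generalizing y with
  | slnil => exact ⟨y, List.nil_sublist y, List.Sublist.refl y, by simp⟩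
  | cons a _ ih =>
    obtain ⟨z, hxz, hyz, hlen⟩ := ih hy
    exact ⟨a :: z, hxz.cons_cons a, hyz.cons a, by grind⟩
  | cons_cons a _ ih =>
    obtain ⟨p, q, rfl, hap, hq⟩ := List.cons_sublist_iff.1 hy
    obtain ⟨z, hxz, hqz, hlen⟩ := ih hq
    exact ⟨p ++ z, (List.singleton_sublist.2 hap).append hxz, (List.Sublist.refl p).append hqz,
      by grind⟩

theorem exists_common_sublist_iff_exists_common_superlist :
    (∃ w, w <+ x ∧ w <+ y ∧ x.length + y.length ≤ w.length + m) ↔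
      ∃ z, x <+ z ∧ y <+ z ∧ z.length ≤ m := by
  constructor
  · rintro ⟨w, hwx, hwy, hm⟩
    obtain ⟨z, hxz, hyz, hlen⟩ := exists_common_superlist_of_common_sublist hwx hwy
    exact ⟨z, hxz, hyz, by omega⟩
  · rintro ⟨z, hxz, hyz, hm⟩
    obtain ⟨w, hwx, hwy, hlen⟩ := exists_common_sublist_of_common_superlist hxz hyz
    exact ⟨w, hwx, hwy, by omega⟩

theorem exists_common_sublist_iff_exists_common_superlist_of_length_eq
    (hx : x.length = n) (hy : y.length = n) :
    (∃ w, w <+ x ∧ w <+ y ∧ n - t ≤ w.length) ↔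
      ∃ z, x <+ z ∧ y <+ z ∧ z.length ≤ n + t := by
  have length_bound (w : List α) : n - t ≤ w.length ↔ x.length + y.length ≤ w.length + (n + t) := by
    omega
  simp only [length_bound, exists_common_sublist_iff_exists_common_superlist]

/-- `z` is obtainable from `x` by at most `t` insertions and deletions in total. The witness `w`
consists of the letters of `x` that survive in `z`; as it is a subsequence of both words, the
subtractions are not truncated. -/
def IndelWithin (t : ℕ) (x z : List α) : Prop :=
  ∃ w, w <+ x ∧ w <+ z ∧ (x.length - w.length) + (z.length - w.length) ≤ t

namespace IndelWithin

theorem symm (h : IndelWithin t x z) : IndelWithin t z x := by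
  obtain ⟨w, hwx, hwz, ht⟩ := h
  exact ⟨w, hwz, hwx, by omega⟩

theorem trans (hxz : IndelWithin s x z) (hzy : IndelWithin t z y) : IndelWithin (s + t) x y := by
  obtain ⟨u, hux, huz, hs⟩ := hxz
  obtain ⟨v, hvz, hvy, ht⟩ := hzy
  obtain ⟨w, hwu, hwv, hlen⟩ := exists_common_sublist_of_common_superlist huz hvz
  have := hux.length_le
  have := huz.length_le
  have := hvz.length_le
  have := hvy.length_le
  exact ⟨w, hwu.trans hux, hwv.trans hvy, by omega⟩

theorem of_sublist (hzx : z <+ x) (ht : x.length - z.length ≤ t) : IndelWithin t x z :=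
  ⟨z, hzx, List.Sublist.refl z, by omega⟩

end IndelWithin

theorem exists_common_sublist_iff_exists_indelWithin (hx : x.length = n) (hy : y.length = n) :
    (∃ w, w <+ x ∧ w <+ y ∧ n - t ≤ w.length) ↔
      ∃ z, IndelWithin t x z ∧ IndelWithin t y z := by
  constructor
  · rintro ⟨w, hwx, hwy, hlen⟩
    exact ⟨w, .of_sublist hwx (by omega), .of_sublist hwy (by omega)⟩
  · rintro ⟨z, hxz, hyz⟩
    obtain ⟨w, hwx, hwy, hlen⟩ := hxz.trans hyz.symm
    exact ⟨w, hwx, hwy, by omega⟩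

theorem levenshtein_equivalences_general (hnt : t < n) (C : Set (Fin n → α)) :
    List.TFAE [
      ∀ x ∈ C, ∀ y ∈ C, x ≠ y → ∀ z, z <+ List.ofFn x → z <+ List.ofFn y → z.length ≤ n - t - 1,
      ∀ x ∈ C, ∀ y ∈ C, x ≠ y →
        ¬ ∃ z, z <+ List.ofFn x ∧ z <+ List.ofFn y ∧ n - t ≤ z.length,
      ∀ x ∈ C, ∀ y ∈ C, x ≠ y →
        ¬ ∃ z, List.ofFn x <+ z ∧ List.ofFn y <+ z ∧ z.length ≤ n + t,
      ∀ x ∈ C, ∀ y ∈ C, x ≠ y →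
        ¬ ∃ z, IndelWithin t (List.ofFn x) z ∧ IndelWithin t (List.ofFn y) z] := by
  tfae_have 1 ↔ 2 := by
    have not_long_iff (z : List α) : ¬ n - t ≤ z.length ↔ z.length ≤ n - t - 1 := by omega
    simp only [not_exists, not_and, not_long_iff]
  tfae_have 2 ↔ 3 := forall₅_congr fun _ _ _ _ _ => not_congr <|
    exists_common_sublist_iff_exists_common_superlist_of_length_eq List.length_ofFn List.length_ofFn
  tfae_have 2 ↔ 4 := forall₅_congr fun _ _ _ _ _ => not_congr <|
    exists_common_sublist_iff_exists_indelWithin List.length_ofFn List.length_ofFn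
  tfae_finish

end CommonSublist

/-- Levenshtein's lemma: equivalence of decodability under deletions, insertions,
and combined insertions/deletions, in terms of common subsequences. -/
theorem levenshtein_equivalences (n t : ℕ) (hnt : t < n)
    (C : Finset (Fin n → Bool)) (hC : 2 ≤ C.card) :
    List.TFAE [
      -- (1) every common subsequence of two distinct codewords has length ≤ n − t − 1
      (∀ x ∈ C, ∀ y ∈ C, x ≠ y → ∀ z : List Bool,
        z.Sublist (List.ofFn x) → z.Sublist (List.ofFn y) → z.length ≤ n - t - 1),
      -- (2) decodable under up to t deletions
      (∀ x ∈ C, ∀ y ∈ C, x ≠ y → ¬ ∃ z : List Bool,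
        z.Sublist (List.ofFn x) ∧ z.Sublist (List.ofFn y) ∧ n - t ≤ z.length),
      -- (3) decodable under up to t insertions
      (∀ x ∈ C, ∀ y ∈ C, x ≠ y → ¬ ∃ z : List Bool,
        (List.ofFn x).Sublist z ∧ (List.ofFn y).Sublist z ∧ z.length ≤ n + t),
      -- (4) decodable under up to t combined insertions and deletions
      (∀ x ∈ C, ∀ y ∈ C, x ≠ y → ¬ ∃ z : List Bool,
        (∃ w : List Bool, w.Sublist (List.ofFn x) ∧ w.Sublist z ∧
          (n - w.length) + (z.length - w.length) ≤ t) ∧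
        (∃ w : List Bool, w.Sublist (List.ofFn y) ∧ w.Sublist z ∧
          (n - w.length) + (z.length - w.length) ≤ t))
    ] := by
  simpa only [IndelWithin, List.length_ofFn, Finset.mem_coe] using
    levenshtein_equivalences_general hnt (C : Set (Fin n → Bool))
end

section
/- For every p ∈ (0,1) there exists R > 0 such that for every ε > 0 there are infinitely many positive integers n for which the following holds: there exist a nonempty finite set Ω, a randomized encoder Enc : {0,1}^⌊Rn⌋ × Ω → {0,1}^n, and a deterministic decoder Dec : {0,1}^(n−⌊pn⌋) → {0,1}^⌊Rn⌋ ∪ {⊥}, such that for every deletion pattern τ ∈ D(n, ⌊pn⌋) and every message m ∈ {0,1}^⌊Rn⌋, the number of ω ∈ Ω with Dec(τ(Enc(m,ω))) ≠ m is at most ε·|Ω|. -/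
/-- Apply a deletion pattern `τ` (a set of coordinates of `{0,…,n−1}`) to a length-`n`
word `w`, producing the subsequence of bits at positions not in `τ`. -/
def applyDel {n : ℕ} {α : Type*} (τ : Finset (Fin n)) (w : Fin n → α) : List α :=
  ((List.finRange n).filter (fun i => i ∉ τ)).map w

/-!
A codeword consists of `N` blocks of constant length `L = M ^ K`. A block carries a letter `i < K`,
written as the square wave with run length `M ^ i`. Put `δ = (1 - p) / 2`. A pattern of `⌊p n⌋`
deletions, `n = N L`, retains a set `U` of at least `2 δ n` positions, so at least `δ N` blocks are
dense: they keep a fraction `δ` of their positions. The main point is that, for at least half of the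
letter sequences `y`, only a fraction exponentially small in `n` of the letter sequences `x` have a
codeword whose restriction to `U` is a subsequence of the codeword of `y`.

* At a scale `i` for which few cells of length `2 M ^ i` are split by a set, the total length of the
  cells it occupies grows by a constant factor. So a dense subset of a block splits many cells at
  all but boundedly many scales. At such a scale, the retained part of the wave oscillates too often
  to be a subsequence of few slower waves: the greedy embedding jumps over `2 ^ t` blocks of `y` if
  these carry no letter below a threshold of order `2 ^ (T - t)` but the new letter of `x` is below
  it.
* A uniform letter falls into the dyadic class of `t` with probability of order `1 / (C * 2 ^ t)`,
  for a jump of `2 ^ t` blocks. Each of the `T` classes thus contributes equally to the expected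
  jump, and for `T` much larger than `C / δ` the expected jump exceeds the `1 / δ` blocks of `y`
  that are available per dense block.
* For these sequences `y`, few blocks see fewer than half of the window lengths `2 ^ t` free of
  small letters. The greedy steps wasted there are paid for by the positions which they use up. The
  resulting potential is a supermartingale along the greedy embedding, and Markov's inequality
  gives the exponential bound.

The encoder chooses among `k` independent random codewords for each message, with `k` a constant
depending on `ε`. For a given pattern and message, each of the `k` words is confusable with
probability `exp (-Ω(n))`, independently given the words of the other messages, so that more than
`ε k` of them are with probability at most `exp (-Ω(ε k n))`. For large `k` this beats the union
bound over at most `2 ^ n` patterns and `2 ^ (R n)` messages.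
-/

open Finset Filter
open scoped List

lemma exp_neg_le_one_sub_half {x : ℝ} (h0 : 0 ≤ x) (h1 : x ≤ 1) : Real.exp (-x) ≤ 1 - x / 2 := by
  have hexp : Real.exp (-x) ≤ 1 / (1 + x) := by
    rw [Real.exp_neg, inv_eq_one_div]
    gcongr
    linarith [Real.add_one_le_exp x]
  refine hexp.trans ((div_le_iff₀ (by positivity)).2 ?_)
  nlinarith

lemma two_pow_le_exp (k : ℕ) : (2 : ℝ) ^ k ≤ Real.exp k := by
  rw [← Real.exp_one_pow]
  gcongr
  linarith [Real.add_one_le_exp (1 : ℝ)]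

/-! ### Cells and scales -/

section Cells

/-- The indices `c` of the aligned cells `[c r, (c + 1) r)` that meet `S`. -/
def occupiedCells (S : Finset ℕ) (r : ℕ) : Finset ℕ := S.image (· / r)

/-- The indices of the aligned cells of length `2 r` whose half number `b` (`false` for the left
half, `true` for the right half) meets `S`. -/
def halfCells (S : Finset ℕ) (r : ℕ) (b : Bool) : Finset ℕ :=
  {c ∈ occupiedCells S (2 * r) | 2 * c + b.toNat ∈ occupiedCells S r}

/-- The indices of the aligned cells of length `2 r` that `S` splits, i.e. meets in both halves. -/
def splitCells (S : Finset ℕ) (r : ℕ) : Finset ℕ := halfCells S r false ∩ halfCells S r true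

/-- The scales `i < k` that are bad for `S`: even counted with their length, the cells of length
`2 M ^ i` split by `S` are few compared with the size of `S`. -/
def badScales (M : ℕ) (S : Finset ℕ) (k : ℕ) : Finset ℕ :=
  {i ∈ range k | 4 * (#(splitCells S (M ^ i)) * M ^ i) < #S}

lemma bodd_two_mul_add_toNat (c : ℕ) (b : Bool) : (2 * c + b.toNat).bodd = b := by
  cases b <;> simp

lemma two_mul_div_add_toNat_bodd (h : ℕ) : 2 * (h / 2) + h.bodd.toNat = h := by
  rw [← Nat.mod_two_of_bodd, Nat.div_add_mod]

lemma exists_mem_of_mem_halfCells {S : Finset ℕ} {r c : ℕ} {b : Bool} (hc : c ∈ halfCells S r b) :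
    ∃ x ∈ S, x / r = 2 * c + b.toNat :=
  mem_image.1 (mem_filter.1 hc).2

lemma occupiedCells_two_mul (S : Finset ℕ) (r : ℕ) :
    occupiedCells S (2 * r) = (occupiedCells S r).image (· / 2) := by
  simp only [occupiedCells, image_image, Function.comp_def, Nat.div_div_eq_div_mul, mul_comm]

lemma card_filter_bodd_occupiedCells (S : Finset ℕ) (r : ℕ) (b : Bool) :
    #{h ∈ occupiedCells S r | h.bodd = b} = #(halfCells S r b) := by
  refine card_nbij' (· / 2) (fun c => 2 * c + b.toNat) ?_ ?_ ?_ ?_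
  · intro h hh
    obtain ⟨hS, rfl⟩ := mem_filter.1 hh
    refine mem_filter.2 ⟨?_, by rwa [two_mul_div_add_toNat_bodd]⟩
    rw [occupiedCells_two_mul]
    exact mem_image_of_mem _ hS
  · exact fun c hc => mem_filter.2 ⟨(mem_filter.1 hc).2, bodd_two_mul_add_toNat c b⟩
  · intro h hh
    obtain ⟨-, rfl⟩ := mem_filter.1 hh
    exact two_mul_div_add_toNat_bodd h
  · exact fun c _ => by have := b.toNat_lt; grind

lemma halfCells_false_union_true (S : Finset ℕ) (r : ℕ) :
    halfCells S r false ∪ halfCells S r true = occupiedCells S (2 * r) := by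
  refine (union_subset (filter_subset _ _) (filter_subset _ _)).antisymm fun c hc => ?_
  obtain ⟨h, hh, rfl⟩ := mem_image.1 (occupiedCells_two_mul S r ▸ hc)
  have hhalf : h / 2 ∈ halfCells S r h.bodd :=
    mem_filter.2 ⟨hc, by rwa [two_mul_div_add_toNat_bodd]⟩
  cases hb : h.bodd <;> rw [hb] at hhalf
  · exact mem_union_left _ hhalf
  · exact mem_union_right _ hhalf

lemma card_occupiedCells (S : Finset ℕ) (r : ℕ) :
    #(occupiedCells S r) = #(occupiedCells S (2 * r)) + #(splitCells S r) := by
  rw [← halfCells_false_union_true, splitCells, card_union_add_card_inter,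
    ← card_filter_bodd_occupiedCells, ← card_filter_bodd_occupiedCells, add_comm]
  simpa only [Bool.not_eq_true] using
    (card_filter_add_card_filter_not (s := occupiedCells S r) (fun h => h.bodd = true)).symm

lemma card_filter_div_eq_le (S : Finset ℕ) {s : ℕ} (hs : 0 < s) (c : ℕ) :
    #{h ∈ S | h / s = c} ≤ s := by
  have hsub : {h ∈ S | h / s = c} ⊆ Ico (c * s) (c * s + s) := by
    intro h hh
    obtain ⟨-, rfl⟩ := mem_filter.1 hh
    exact mem_Ico.2 ⟨Nat.div_mul_le_self h s, Nat.lt_div_mul_add hs⟩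
  simpa using card_le_card hsub

lemma card_occupiedCells_le_mul (S : Finset ℕ) (r : ℕ) {s : ℕ} (hs : 0 < s) :
    #(occupiedCells S r) ≤ s * #(occupiedCells S (r * s)) := by
  refine card_le_mul_card_image_of_maps_to (f := (· / s)) (fun h hh => ?_) s
    fun c _ => card_filter_div_eq_le _ hs c
  obtain ⟨x, hx, rfl⟩ := mem_image.1 hh
  exact mem_image.2 ⟨x, hx, (Nat.div_div_eq_div_mul ..).symm⟩

lemma card_occupiedCells_mul_le {M : ℕ} (hM : 0 < M) (hM2 : 2 ∣ M) (S : Finset ℕ) (k : ℕ) :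
    #(occupiedCells S (2 * M ^ k)) * (2 * M ^ k) ≤
      #(occupiedCells S (M ^ (k + 1))) * M ^ (k + 1) := by
  obtain ⟨s, rfl⟩ := hM2
  have hcells := card_occupiedCells_le_mul S (2 * (2 * s) ^ k) (s := s) (by omega)
  have hpow : 2 * (2 * s) ^ k * s = (2 * s) ^ (k + 1) := by ring
  rw [hpow] at hcells
  calc _ ≤ s * #(occupiedCells S ((2 * s) ^ (k + 1))) * (2 * (2 * s) ^ k) := by gcongr
    _ = _ := by ring

/-- From scale `M ^ k` to scale `M ^ (k + 1)` the total length of the occupied cells does not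
decrease, and at a bad scale it grows by a factor `3 / 2`, because almost every occupied cell of
length `2 M ^ k` then has an empty half. -/
lemma three_halves_pow_card_badScales_mul_le {M : ℕ} (hM : 0 < M) (hM2 : 2 ∣ M) (S : Finset ℕ)
    (k : ℕ) :
    (3 / 2 : ℝ) ^ #(badScales M S k) * #S ≤ #(occupiedCells S (M ^ k)) * (M : ℝ) ^ k := by
  induction k with
  | zero => simp [badScales, occupiedCells]
  | succ k ih =>
    have hmono : (#(occupiedCells S (2 * M ^ k)) : ℝ) * (2 * (M : ℝ) ^ k) ≤
        #(occupiedCells S (M ^ (k + 1))) * (M : ℝ) ^ (k + 1) :=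
      mod_cast card_occupiedCells_mul_le hM hM2 S k
    have hsplit : (#(occupiedCells S (M ^ k)) : ℝ) =
        #(occupiedCells S (2 * M ^ k)) + #(splitCells S (M ^ k)) :=
      mod_cast card_occupiedCells S (M ^ k)
    by_cases hk : 4 * (#(splitCells S (M ^ k)) * M ^ k) < #S
    · have hcard : #(badScales M S (k + 1)) = #(badScales M S k) + 1 := by
        rw [badScales, range_add_one, filter_insert, if_pos hk, card_insert_of_notMem (by simp),
          badScales]
      have hS : (#S : ℝ) ≤ (3 / 2 : ℝ) ^ #(badScales M S k) * #S :=
        le_mul_of_one_le_left (by positivity) (one_le_pow₀ (by norm_num))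
      have hk' : 4 * (#(splitCells S (M ^ k)) * (M : ℝ) ^ k) < #S := mod_cast hk
      rw [hcard, pow_succ]
      rw [hsplit] at ih
      linarith
    · have hcard : badScales M S (k + 1) = badScales M S k := by
        rw [badScales, range_add_one, filter_insert, if_neg hk, badScales]
      have hle : #(occupiedCells S (M ^ k)) * M ^ k ≤
          #(occupiedCells S (2 * M ^ k)) * (2 * M ^ k) := by
        calc _ ≤ 2 * #(occupiedCells S (M ^ k * 2)) * M ^ k := by
              gcongr; exact card_occupiedCells_le_mul S (M ^ k) two_pos
          _ = _ := by rw [mul_comm (M ^ k) 2]; ring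
      rw [hcard]
      exact (ih.trans (mod_cast hle)).trans hmono

lemma three_halves_pow_card_badScales_mul_le_pow {M K j : ℕ} {S : Finset ℕ} (hM : 0 < M)
    (hM2 : 2 ∣ M) (hS : ∀ x ∈ S, x / M ^ K = j) :
    (3 / 2 : ℝ) ^ #(badScales M S K) * #S ≤ (M : ℝ) ^ K := by
  have hone : #(occupiedCells S (M ^ K)) ≤ 1 :=
    card_le_one_iff_subset_singleton.2 ⟨j, image_subset_iff.2 fun x hx => by simp [hS x hx]⟩
  calc _ ≤ #(occupiedCells S (M ^ K)) * (M : ℝ) ^ K :=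
        three_halves_pow_card_badScales_mul_le hM hM2 S K
    _ ≤ 1 * (M : ℝ) ^ K := by gcongr; exact_mod_cast hone
    _ = (M : ℝ) ^ K := one_mul _

end Cells

/-! ### Square waves and greedy embeddings -/

section Embeddings

/-- The infinite binary word with alternating runs of length `r`. -/
def squareWave (r x : ℕ) : Bool := (x / r).bodd

/-- The word of the letter sequence `y`: the block `v` of length `M ^ K` carries the square wave of
scale `y v`, that is, with runs of length `M ^ y v`. -/
def blockWord (M K : ℕ) (y : ℕ → ℕ) (x : ℕ) : Bool := squareWave (M ^ y (x / M ^ K)) x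

variable {α : Type*}

/-- The restriction of `X` to the positions `S` occurs as a subsequence of `Y` within the window
`[a, b)`. -/
def Embeds (S : Finset ℕ) (X Y : ℕ → α) (a b : ℕ) : Prop :=
  ∃ φ : ℕ → ℕ, StrictMonoOn φ S ∧ ∀ x ∈ S, φ x ∈ Ico a b ∧ Y (φ x) = X x

lemma Embeds.mono_window {S : Finset ℕ} {X Y : ℕ → α} {a a' b b' : ℕ} (h : Embeds S X Y a b)
    (ha : a' ≤ a) (hb : b ≤ b') : Embeds S X Y a' b' :=
  h.imp fun _ hφ => ⟨hφ.1, fun x hx => ⟨Ico_subset_Ico ha hb (hφ.2 x hx).1, (hφ.2 x hx).2⟩⟩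

lemma Embeds.card_le {S : Finset ℕ} {X Y : ℕ → α} {a b : ℕ} (h : Embeds S X Y a b) :
    #S ≤ b - a := by
  obtain ⟨φ, hmono, hφ⟩ := h
  simpa using card_le_card_of_injOn φ (fun x hx => (hφ x hx).1) hmono.injOn

/-- Both bits occur on `S` in a split cell, so its image meets two different runs of `Y`; hence the
images of different split cells start in different runs. -/
lemma Embeds.card_splitCells_le {S : Finset ℕ} {Y : ℕ → Bool} {r R a b : ℕ} (hR : 0 < R)
    (h : Embeds S (squareWave r) Y (a * R) (b * R))
    (hY : ∀ p q, p / R ∈ Ico a b → p / R = q / R → Y p = Y q) : #(splitCells S r) ≤ b - a := by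
  obtain ⟨φ, hmono, hφ⟩ := h
  choose! left hleftS hleft using fun c (hc : c ∈ splitCells S r) =>
    exists_mem_of_mem_halfCells (mem_inter.1 hc).1
  choose! right hrightS hright using fun c (hc : c ∈ splitCells S r) =>
    exists_mem_of_mem_halfCells (mem_inter.1 hc).2
  have hlt : ∀ x ∈ S, ∀ x' ∈ S, x / r < x' / r → φ x < φ x' := fun x hx x' hx' hlt =>
    hmono hx hx' (lt_of_not_ge fun hle => hlt.not_ge (Nat.div_le_div_right hle))
  have hmem : ∀ x ∈ S, φ x / R ∈ Ico a b := fun x hx => by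
    have := mem_Ico.1 (hφ x hx).1
    exact mem_Ico.2 ⟨(Nat.le_div_iff_mul_le hR).2 this.1, (Nat.div_lt_iff_lt_mul hR).2 this.2⟩
  have hrun : StrictMonoOn (fun c => φ (left c) / R) (splitCells S r) := by
    intro c hc c' hc' hcc'
    have hne : φ (left c) / R ≠ φ (right c) / R := fun heq => by
      have hbit := hY _ _ (hmem _ (hleftS c hc)) heq
      rw [(hφ _ (hleftS c hc)).2, (hφ _ (hrightS c hc)).2, squareWave, squareWave, hleft c hc,
        hright c hc, bodd_two_mul_add_toNat, bodd_two_mul_add_toNat] at hbit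
      exact Bool.false_ne_true hbit
    have hlr : φ (left c) < φ (right c) :=
      hlt _ (hleftS c hc) _ (hrightS c hc) (by simp [hleft c hc, hright c hc])
    have hrl : φ (right c) < φ (left c') :=
      hlt _ (hrightS c hc) _ (hleftS c' hc') (by simp [hleft c' hc', hright c hc]; omega)
    exact ((Nat.div_le_div_right hlr.le).lt_of_ne hne).trans_le (Nat.div_le_div_right hrl.le)
  simpa using card_le_card_of_injOn _ (fun c hc => hmem _ (hleftS c hc)) hrun.injOn

lemma blockWord_eq_of_div_eq {M K i : ℕ} {y : ℕ → ℕ} {p q : ℕ} (hi : i < K)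
    (hy : i < y (p / M ^ K)) (hpq : p / M ^ (i + 1) = q / M ^ (i + 1)) :
    blockWord M K y p = blockWord M K y q := by
  have hdiv : ∀ e, i < e → p / M ^ e = q / M ^ e := fun e he => by
    obtain ⟨s, hs⟩ := pow_dvd_pow M he
    rw [hs, ← Nat.div_div_eq_div_mul, ← Nat.div_div_eq_div_mul, hpq]
  rw [blockWord, blockWord, squareWave, squareWave, ← hdiv K hi, hdiv _ hy]

lemma Embeds.card_splitCells_blockWord_le {S : Finset ℕ} {M K i u d : ℕ} {y : ℕ → ℕ} (hM : 0 < M)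
    (hi : i < K) (hy : ∀ v ∈ Ico u (u + d), i < y v)
    (h : Embeds S (squareWave (M ^ i)) (blockWord M K y) (u * M ^ K) ((u + d) * M ^ K)) :
    #(splitCells S (M ^ i)) ≤ d * M ^ (K - i - 1) := by
  have hpow : M ^ K = M ^ (K - i - 1) * M ^ (i + 1) := by rw [← pow_add]; congr 1; omega
  rw [hpow, ← mul_assoc, ← mul_assoc] at h
  refine (h.card_splitCells_le (by positivity) fun p q hp hpq => ?_).trans_eq
    (by rw [← Nat.sub_mul, Nat.add_sub_cancel_left])
  refine blockWord_eq_of_div_eq hi (hy _ ?_) hpq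
  rw [mem_Ico, Nat.le_div_iff_mul_le (by positivity), Nat.div_lt_iff_lt_mul (by positivity)] at hp ⊢
  rwa [hpow, ← mul_assoc, ← mul_assoc]

lemma frequently_blockWord_eq {M K N : ℕ} {y : ℕ → ℕ} (hM : 0 < M) (hy : ∀ v ≥ N, y v = K)
    (b : Bool) : ∃ᶠ p in atTop, blockWord M K y p = b := by
  refine frequently_atTop.2 fun m => ⟨M ^ K * (2 * (N + m) + b.toNat), ?_, ?_⟩
  · calc m ≤ 2 * (N + m) + b.toNat := by omega
      _ ≤ _ := Nat.le_mul_of_pos_left _ (by positivity)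
  · rw [blockWord, squareWave, Nat.mul_div_cancel_left _ (by positivity), hy _ (by omega),
      Nat.mul_div_cancel_left _ (by positivity), bodd_two_mul_add_toNat]

lemma exists_embeds {Y : ℕ → α} (hY : ∀ a, ∃ᶠ p in atTop, Y p = a) (S : Finset ℕ) (X : ℕ → α)
    (q : ℕ) : ∃ q', q ≤ q' ∧ Embeds S X Y q q' := by
  induction S using Finset.induction_on_max with
  | empty => exact ⟨q, le_rfl, id, by simp [StrictMonoOn]⟩
  | insert m S hm ih =>
    obtain ⟨q', hq', φ, hmono, hφ⟩ := ih
    obtain ⟨p, hp, hpm⟩ := frequently_atTop.1 (hY (X m)) q'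
    have hupd : ∀ x ∈ S, Function.update φ m p x = φ x := fun x hx =>
      Function.update_of_ne (hm x hx).ne p φ
    have hlt : ∀ x ∈ S, φ x < p := fun x hx => (mem_Ico.1 (hφ x hx).1).2.trans_le hp
    refine ⟨p + 1, by omega, Function.update φ m p, ?_, ?_⟩
    · rw [coe_insert, strictMonoOn_insert_iff]
      refine ⟨fun x hx _ => ?_, fun x hx hmx => absurd (hm x hx) hmx.not_gt,
        fun x hx x' hx' hxx' => ?_⟩
      · rw [hupd x hx, Function.update_self]; exact hlt x hx
      · rw [hupd x hx, hupd x' hx']; exact hmono hx hx' hxx'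
    · simp only [forall_mem_insert, Function.update_self, hpm, mem_Ico, and_true]
      refine ⟨by omega, fun x hx => ?_⟩
      have := mem_Ico.1 (hφ x hx).1
      rw [hupd x hx]
      exact ⟨⟨this.1, this.2.trans (by omega)⟩, (hφ x hx).2⟩

/-- The least end of a window of `Y`, starting at `q`, into which the restriction of `X` to `S`
embeds. It is meaningful when there is such a window, see `exists_embeds`. -/
noncomputable def greedyEnd (S : Finset ℕ) (X Y : ℕ → α) (q : ℕ) : ℕ :=
  sInf {q' | q ≤ q' ∧ Embeds S X Y q q'}

lemma greedyEnd_le {S : Finset ℕ} {X Y : ℕ → α} {q q' : ℕ} (hq : q ≤ q')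
    (h : Embeds S X Y q q') : greedyEnd S X Y q ≤ q' :=
  Nat.sInf_le ⟨hq, h⟩

lemma embeds_greedyEnd {Y : ℕ → α} (hY : ∀ a, ∃ᶠ p in atTop, Y p = a) (S : Finset ℕ) (X : ℕ → α)
    (q : ℕ) : q ≤ greedyEnd S X Y q ∧ Embeds S X Y q (greedyEnd S X Y q) :=
  Nat.sInf_mem (exists_embeds hY S X q)

lemma add_card_le_greedyEnd {Y : ℕ → α} (hY : ∀ a, ∃ᶠ p in atTop, Y p = a) (S : Finset ℕ)
    (X : ℕ → α) (q : ℕ) : q + #S ≤ greedyEnd S X Y q := by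
  have ⟨hq, h⟩ := embeds_greedyEnd hY S X q
  have := h.card_le
  omega

/-- The part of `U` in block `j`, the blocks having length `L`. -/
def block (L : ℕ) (U : Finset ℕ) (j : ℕ) : Finset ℕ := {p ∈ U | p / L = j}

/-- The end of the greedy embedding, block after block, of the restriction to `U` of the word whose
block `v` carries `X (x v)`. -/
noncomputable def greedyRun {ι : Type*} (X : ι → ℕ → α) (Y : ℕ → α) (L : ℕ) (U : Finset ℕ) {N : ℕ}
    (x : Fin N → ι) : ℕ :=
  Fin.foldl N (fun q v => greedyEnd (block L U v) (X (x v)) Y q) 0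

lemma greedyRun_le {ι : Type*} {X : ι → ℕ → α} {Y Z : ℕ → α} {L : ℕ} {U : Finset ℕ} {N n : ℕ}
    {x : Fin N → ι} (hZ : ∀ p ∈ U, ∀ v : Fin N, p / L = v → Z p = X (x v) p)
    (h : Embeds U Z Y 0 n) : greedyRun X Y L U x ≤ n := by
  obtain ⟨φ, hmono, hφ⟩ := h
  suffices H : greedyRun X Y L U x ≤ n ∧ ∀ p ∈ U, N ≤ p / L → greedyRun X Y L U x ≤ φ p from H.1
  induction N with
  | zero => simp [greedyRun]
  | succ N ih =>
    obtain ⟨ihn, ihφ⟩ := ih (x := fun v => x v.castSucc) fun p hp v hv => hZ p hp v.castSucc hv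
    have hend : ∀ e, greedyRun X Y L U (fun v => x v.castSucc) ≤ e →
        (∀ p ∈ block L U N, φ p < e) → greedyRun X Y L U x ≤ e := fun e he hpe => by
      rw [greedyRun, Fin.foldl_succ_last]
      refine greedyEnd_le he ⟨φ, hmono.mono (filter_subset _ _), fun p hp => ?_⟩
      obtain ⟨hpU, hpN⟩ := mem_filter.1 hp
      exact ⟨mem_Ico.2 ⟨ihφ p hpU hpN.ge, hpe p hp⟩,
        (hφ p hpU).2.trans (hZ p hpU (Fin.last N) hpN)⟩
    refine ⟨hend n ihn fun p hp => (mem_Ico.1 (hφ p (mem_filter.1 hp).1).1).2, fun p hp hNp => ?_⟩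
    refine hend _ (ihφ p hp (by omega)) fun p' hp' => ?_
    obtain ⟨hpU', hpN'⟩ := mem_filter.1 hp'
    exact hmono hpU' hp <| lt_of_not_ge fun hle => by
      have := Nat.div_le_div_right (c := L) hle
      omega

lemma sum_foldl_le {ι σ : Type*} [Fintype ι] {step : ℕ → ι → σ → σ} {V : ℕ → σ → ℝ}
    (hV : ∀ j s, ∑ i, V (j + 1) (step j i s) ≤ Fintype.card ι * V j s) (s : σ) (N : ℕ) :
    ∑ x : Fin N → ι, V N (Fin.foldl N (fun s v => step v (x v) s) s) ≤
      (Fintype.card ι : ℝ) ^ N * V 0 s := by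
  induction N with
  | zero => simp
  | succ N ih =>
    rw [← (Fin.snocEquiv (fun _ : Fin (N + 1) => ι)).sum_comp, Fintype.sum_prod_type_right]
    simp only [Fin.snocEquiv_apply, Fin.foldl_succ_last, Fin.snoc_castSucc, Fin.snoc_last,
      Fin.val_castSucc, Fin.val_last]
    calc _ ≤ ∑ x : Fin N → ι, Fintype.card ι * V N (Fin.foldl N (fun s v => step v (x v) s) s) :=
          sum_le_sum fun x _ => hV _ _
      _ ≤ Fintype.card ι * ((Fintype.card ι : ℝ) ^ N * V 0 s) := by rw [← mul_sum]; gcongr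
      _ = _ := by ring

end Embeddings

/-! ### The parameters of the construction -/

/-- The constants of the construction for subsets of density `δ`. -/
structure CodeParams where
  /-- ratio of consecutive run lengths -/
  M : ℕ
  /-- number of window lengths `2 ^ t`, `t < T`, counted in blocks -/
  T : ℕ
  /-- ratio of the number of scales to the largest threshold -/
  C : ℕ
  /-- bound for the number of bad scales of a dense subset of a block -/
  b : ℕ
  /-- density from which a subset of a block counts as dense -/
  δ : ℝ
  b_pos : 0 < b
  δ_pos : 0 < δ
  two_dvd_M : 2 ∣ M
  lt_δ_mul_M : 4 * (2 ^ T + 1) < δ * M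
  one_lt_pow_b_mul_δ : 1 < (3 / 2 : ℝ) ^ b * δ
  le_C_mul_δ_sq : 32 ≤ C * δ ^ 2
  le_T_mul_δ : 64 * C ≤ T * δ

lemma exists_codeParams {δ : ℝ} (hδ : 0 < δ) : ∃ P : CodeParams, P.δ = δ := by
  obtain ⟨b, hb⟩ := pow_unbounded_of_one_lt (1 / δ) (show (1 : ℝ) < 3 / 2 by norm_num)
  obtain ⟨C, hC⟩ := exists_nat_ge (32 / δ ^ 2)
  obtain ⟨T, hT⟩ := exists_nat_ge (64 * C / δ)
  obtain ⟨m, hm⟩ := exists_nat_gt (4 * (2 ^ T + 1) / (2 * δ))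
  rw [div_lt_iff₀ (by positivity)] at hb hm
  rw [div_le_iff₀ (by positivity)] at hC hT
  have hb' : 1 < (3 / 2 : ℝ) ^ (b + 1) * δ := by rw [pow_succ]; linarith
  exact ⟨⟨2 * m, T, C, b + 1, δ, b.succ_pos, hδ, dvd_mul_right 2 m, by push_cast; linarith, hb', hC,
    hT⟩, rfl⟩

namespace CodeParams

variable (P : CodeParams)

/-- The number of scales. As a letter, `K` stands for a wave slower than those of all scales
`i < K`. -/
def K : ℕ := 2 * P.b * 2 ^ P.T * P.C

/-- The block length. -/
def L : ℕ := P.M ^ P.K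

/-- The threshold for windows of `2 ^ t` blocks: a uniform letter is below it with probability
`1 / (C * 2 ^ t)`. -/
def threshold (t : ℕ) : ℕ := 2 * P.b * 2 ^ (P.T - t)

/-- The letters below `threshold t` but not below `threshold (t + 1)`. -/
def dyadicClass (t : ℕ) : Finset ℕ := Ico (P.threshold (t + 1)) (P.threshold t)

/-- The infinite word of the letter sequence `y`. -/
def word (y : ℕ → ℕ) : ℕ → Bool := blockWord P.M P.K y

/-- The `t < T` for which no letter of `y` among the blocks `u, …, u + 2 ^ t` is below
`threshold t`, so that all these blocks carry slow waves. -/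
def slowWindows (y : ℕ → ℕ) (u : ℕ) : Finset ℕ :=
  {t ∈ range P.T | ∀ s ≤ 2 ^ t, P.threshold t ≤ y (u + s)}

/-- The blocks `u < N` of `y` for which fewer than half of the windows are slow. -/
def congestedBlocks (y : ℕ → ℕ) (N : ℕ) : Finset ℕ :=
  {u ∈ range N | 2 * #(P.slowWindows y u) < P.T}

/-- The blocks `v < j` in which `U` has density at least `δ`. -/
noncomputable def denseBlocks (U : Finset ℕ) (j : ℕ) : Finset ℕ :=
  {v ∈ range j | P.δ * P.L ≤ #(block P.L U v)}

/-- The greedy step: where the embedding of the wave of scale `i`, restricted to `U` in block `j`,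
into the word of `y` ends when it starts at position `q`. -/
noncomputable def next (U : Finset ℕ) (y : ℕ → ℕ) (j i q : ℕ) : ℕ :=
  greedyEnd (block P.L U j) (squareWave (P.M ^ i)) (P.word y) q

lemma M_pos : 0 < P.M := by
  refine Nat.pos_of_ne_zero fun h => ?_
  have := P.lt_δ_mul_M
  rw [h, Nat.cast_zero, mul_zero] at this
  exact this.not_ge (by positivity)

lemma C_pos : 0 < P.C := by
  refine Nat.pos_of_ne_zero fun h => ?_
  have := P.le_C_mul_δ_sq
  norm_num [h] at this

lemma T_pos : 0 < P.T := by
  refine Nat.pos_of_ne_zero fun h => ?_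
  have hT := P.le_T_mul_δ
  have hC : (0 : ℝ) < P.C := mod_cast P.C_pos
  rw [h, Nat.cast_zero, zero_mul] at hT
  linarith

lemma K_pos : 0 < P.K := by
  have := P.b_pos
  have := P.C_pos
  unfold K
  positivity

lemma L_pos : 0 < P.L := pow_pos P.M_pos _

lemma cast_L : (P.L : ℝ) = (P.M : ℝ) ^ P.K := by rw [L, Nat.cast_pow]

lemma threshold_antitone : Antitone P.threshold := fun t t' h => by
  unfold threshold
  gcongr
  exact one_le_two

lemma threshold_le_K (t : ℕ) : P.threshold t ≤ P.K :=
  calc P.threshold t ≤ P.threshold 0 := P.threshold_antitone t.zero_le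
    _ ≤ P.K := Nat.le_mul_of_pos_right _ P.C_pos

lemma threshold_eq_add {t : ℕ} (ht : t < P.T) :
    P.threshold t = P.threshold (t + 1) + 2 * P.b * 2 ^ (P.T - t - 1) := by
  obtain ⟨s, hs⟩ : ∃ s, P.T = t + s + 1 := ⟨P.T - t - 1, by omega⟩
  simp only [threshold, hs, show t + s + 1 - t = s + 1 by omega, Nat.add_sub_cancel,
    show t + s + 1 - (t + 1) = s by omega, pow_succ]
  ring

variable {P}

section GreedyStep

variable {U : Finset ℕ} {y : ℕ → ℕ} {N j q : ℕ}

lemma frequently_word_eq (hy : ∀ v ≥ N, y v = P.K) (b : Bool) : ∃ᶠ p in atTop, P.word y p = b :=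
  frequently_blockWord_eq P.M_pos hy b

lemma add_card_block_le_next (hy : ∀ v ≥ N, y v = P.K) (i : ℕ) :
    q + #(block P.L U j) ≤ P.next U y j i q :=
  add_card_le_greedyEnd (frequently_word_eq hy) _ _ _

lemma le_next (hy : ∀ v ≥ N, y v = P.K) (i : ℕ) : q ≤ P.next U y j i q :=
  (Nat.le_add_right _ _).trans (add_card_block_le_next hy i)

lemma card_badScales_le (hj : P.δ * P.L ≤ #(block P.L U j)) :
    #(badScales P.M (block P.L U j) P.K) ≤ P.b := by
  have hpow := three_halves_pow_card_badScales_mul_le_pow P.M_pos P.two_dvd_M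
    (S := block P.L U j) (K := P.K) (j := j) fun x hx => (mem_filter.1 hx).2
  rw [← cast_L] at hpow
  have hL : (0 : ℝ) < P.L := mod_cast P.L_pos
  by_contra! hlt
  refine hpow.not_gt ?_
  calc (P.L : ℝ) < (3 / 2 : ℝ) ^ P.b * P.δ * P.L := lt_mul_of_one_lt_left hL P.one_lt_pow_b_mul_δ
    _ = (3 / 2 : ℝ) ^ P.b * (P.δ * P.L) := mul_assoc ..
    _ ≤ _ := by
      have := P.δ_pos
      gcongr
      norm_num

/-- Within the next `2 ^ t` blocks all waves of `y` are slower than that of scale `i`, so they have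
too few runs for the cells split by the dense block. -/
lemma add_le_next {i t : ℕ} (hy : ∀ v ≥ N, y v = P.K) (hj : P.δ * P.L ≤ #(block P.L U j))
    (hbad : i ∉ badScales P.M (block P.L U j) P.K) (ht : t ∈ P.slowWindows y (q / P.L))
    (hi : i < P.threshold t) : q + 2 ^ t * P.L ≤ P.next U y j i q := by
  by_contra! hlt
  have hiK : i < P.K := hi.trans_le (P.threshold_le_K t)
  obtain ⟨htT, hslow⟩ := mem_filter.1 ht
  have hembed := (embeds_greedyEnd (frequently_word_eq hy) (block P.L U j)
    (squareWave (P.M ^ i)) q).2.mono_window (Nat.div_mul_le_self q P.L)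
    (b' := (q / P.L + (2 ^ t + 1)) * P.L) (by
      have := Nat.lt_div_mul_add P.L_pos (a := q)
      change P.next U y j i q ≤ _
      linarith)
  have hsplit := hembed.card_splitCells_blockWord_le P.M_pos hiK fun v hv => by
    obtain ⟨s, rfl⟩ := Nat.exists_eq_add_of_le (mem_Ico.1 hv).1
    have := (mem_Ico.1 hv).2
    exact hi.trans_le (hslow s (by omega))
  have hcard : #(block P.L U j) ≤ 4 * (#(splitCells (block P.L U j) (P.M ^ i)) * P.M ^ i) := by
    simpa [badScales, hiK] using hbad
  have hL : P.L = P.M * (P.M ^ (P.K - i - 1) * P.M ^ i) := by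
    rw [L, ← pow_add, ← pow_succ']; congr 1; omega
  have hle : #(block P.L U j) ≤ 4 * (2 ^ P.T + 1) * (P.M ^ (P.K - i - 1) * P.M ^ i) :=
    calc _ ≤ 4 * ((2 ^ t + 1) * P.M ^ (P.K - i - 1) * P.M ^ i) := hcard.trans (by gcongr)
      _ = 4 * (2 ^ t + 1) * (P.M ^ (P.K - i - 1) * P.M ^ i) := by ring
      _ ≤ _ := by gcongr; exacts [one_le_two, (mem_range.1 htT).le]
  have hpos : (0 : ℝ) < P.M ^ (P.K - i - 1) * P.M ^ i := by
    have : (0 : ℝ) < P.M := mod_cast P.M_pos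
    positivity
  have hle' : P.δ * P.M * (P.M ^ (P.K - i - 1) * P.M ^ i) ≤
      4 * (2 ^ P.T + 1) * ((P.M : ℝ) ^ (P.K - i - 1) * P.M ^ i) :=
    calc _ = P.δ * P.L := by rw [hL]; push_cast; ring
      _ ≤ #(block P.L U j) := hj
      _ ≤ _ := mod_cast hle
  exact (le_of_mul_le_mul_right hle' hpos).not_gt P.lt_δ_mul_M

lemma le_two_mul_card_slowWindows (hy : ∀ v ≥ N, y v = P.K) {u : ℕ}
    (hu : u ∉ P.congestedBlocks y N) : P.T ≤ 2 * #(P.slowWindows y u) := by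
  by_contra! hlt
  rcases lt_or_ge u N with huN | hNu
  · exact hu (mem_filter.2 ⟨mem_range.2 huN, hlt⟩)
  · have hall : P.slowWindows y u = range P.T := filter_true_of_mem fun t _ s _ => by
      rw [hy _ (by omega)]; exact P.threshold_le_K t
    rw [hall, card_range] at hlt
    omega

lemma le_card_dyadicClass_sdiff_badScales (hj : P.δ * P.L ≤ #(block P.L U j)) {t : ℕ}
    (ht : t < P.T) :
    P.b * 2 ^ (P.T - t - 1) ≤ #(P.dyadicClass t \ badScales P.M (block P.L U j) P.K) := by
  have hsdiff := le_card_sdiff (badScales P.M (block P.L U j) P.K) (P.dyadicClass t)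
  have hbad := card_badScales_le hj
  have hb : P.b ≤ P.b * 2 ^ (P.T - t - 1) := Nat.le_mul_of_pos_right _ (by positivity)
  have hclass : #(P.dyadicClass t) = 2 * (P.b * 2 ^ (P.T - t - 1)) := by
    rw [dyadicClass, Nat.card_Ico, threshold_eq_add P ht, Nat.add_sub_cancel_left, mul_assoc]
  omega

lemma pairwiseDisjoint_dyadicClass : Pairwise (Function.onFun Disjoint P.dyadicClass) := by
  intro t t' htt'
  have := P.threshold_antitone.pairwise_disjoint_on_Ico_succ htt'
  rw [Function.onFun, ← disjoint_coe]
  simpa [dyadicClass] using this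

end GreedyStep

/-! ### The potential of the greedy embedding -/

section Potential

/-- The exponential rate at which the potential decreases with the position. -/
noncomputable def decay (P : CodeParams) : ℝ := 1 / (2 ^ P.T * P.L)

/-- The exponential gain of a greedy step on a dense block that starts in an uncongested block. -/
noncomputable def gain (P : CodeParams) : ℝ := P.T / (16 * P.C * 2 ^ P.T)

/-- The positions in a congested block or in the block after it. -/
def congestedPositions (P : CodeParams) (y : ℕ → ℕ) (N : ℕ) : Finset ℕ :=
  (P.congestedBlocks y N).biUnion fun u => Ico (u * P.L) ((u + 2) * P.L)

/-- A bound for the number of greedy steps on dense blocks that can start in a congested block, from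
position `q` on: each of them uses up `δ * L` congested positions. -/
noncomputable def charge (P : CodeParams) (y : ℕ → ℕ) (N q : ℕ) : ℝ :=
  #{p ∈ P.congestedPositions y N | q ≤ p} / (P.δ * P.L)

/-- The potential of being at position `q` after `j` greedy steps. -/
noncomputable def potential (P : CodeParams) (U : Finset ℕ) (y : ℕ → ℕ) (N j q : ℕ) : ℝ :=
  Real.exp (-P.decay * q + P.gain * (#(P.denseBlocks U j) + P.charge y N q))

/-- The change of the factor `exp (-decay * q)` of the potential in a greedy step from `q`. -/
noncomputable def stepFactor (P : CodeParams) (U : Finset ℕ) (y : ℕ → ℕ) (j i q : ℕ) : ℝ :=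
  Real.exp (-P.decay * (P.next U y j i q - q))

variable {P : CodeParams} {U : Finset ℕ} {y : ℕ → ℕ} {N j q : ℕ}

lemma decay_pos : 0 < P.decay := by
  have := P.L_pos
  unfold decay
  positivity

lemma gain_nonneg : 0 ≤ P.gain := by
  unfold gain
  positivity

lemma δ_mul_L_pos : 0 < P.δ * P.L :=
  mul_pos P.δ_pos (mod_cast P.L_pos)

lemma stepFactor_le_one (hy : ∀ v ≥ N, y v = P.K) (i : ℕ) : P.stepFactor U y j i q ≤ 1 := by
  have hle : (q : ℝ) ≤ P.next U y j i q := mod_cast le_next hy i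
  rw [stepFactor, Real.exp_le_one_iff, neg_mul, neg_nonpos]
  exact mul_nonneg decay_pos.le (sub_nonneg.2 hle)

lemma le_one_sub_stepFactor {i t : ℕ} (hy : ∀ v ≥ N, y v = P.K)
    (hj : P.δ * P.L ≤ #(block P.L U j)) (hbad : i ∉ badScales P.M (block P.L U j) P.K)
    (ht : t ∈ P.slowWindows y (q / P.L)) (hi : i < P.threshold t) :
    (2 : ℝ) ^ t / 2 ^ P.T / 2 ≤ 1 - P.stepFactor U y j i q := by
  have hL : (0 : ℝ) < P.L := mod_cast P.L_pos
  have htT : t < P.T := mem_range.1 (mem_filter.1 ht).1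
  have hnext : (q : ℝ) + 2 ^ t * P.L ≤ P.next U y j i q := mod_cast add_le_next hy hj hbad ht hi
  have hjump : (2 : ℝ) ^ t / 2 ^ P.T ≤ P.decay * (P.next U y j i q - q) :=
    calc (2 : ℝ) ^ t / 2 ^ P.T = P.decay * (2 ^ t * P.L) := by unfold decay; field_simp
      _ ≤ _ := by gcongr; exacts [decay_pos.le, by linarith]
  have hone : (2 : ℝ) ^ t / 2 ^ P.T ≤ 1 :=
    (div_le_one (by positivity)).2 (pow_le_pow_right₀ one_le_two htT.le)
  have hexp := exp_neg_le_one_sub_half (by positivity) hone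
  have hfactor : P.stepFactor U y j i q ≤ Real.exp (-((2 : ℝ) ^ t / 2 ^ P.T)) :=
    Real.exp_le_exp.2 (by linarith)
  linarith

lemma le_sum_dyadicClass {t : ℕ} (hy : ∀ v ≥ N, y v = P.K) (hj : P.δ * P.L ≤ #(block P.L U j))
    (ht : t ∈ P.slowWindows y (q / P.L)) :
    (P.b : ℝ) / 4 ≤ ∑ i ∈ P.dyadicClass t \ badScales P.M (block P.L U j) P.K,
      (1 - P.stepFactor U y j i q) := by
  have htT : t < P.T := mem_range.1 (mem_filter.1 ht).1
  have hcard : (P.b : ℝ) * 2 ^ (P.T - t - 1) ≤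
      #(P.dyadicClass t \ badScales P.M (block P.L U j) P.K) :=
    mod_cast le_card_dyadicClass_sdiff_badScales hj htT
  have hpow : (2 : ℝ) ^ P.T = 2 ^ (P.T - t - 1) * 2 ^ t * 2 := by
    rw [← pow_add, ← pow_succ]; congr 1; omega
  calc (P.b : ℝ) / 4 = P.b * 2 ^ (P.T - t - 1) * (2 ^ t / 2 ^ P.T / 2) := by
        rw [hpow]; field_simp; norm_num
    _ ≤ #(P.dyadicClass t \ badScales P.M (block P.L U j) P.K) • ((2 : ℝ) ^ t / 2 ^ P.T / 2) := by
        rw [nsmul_eq_mul]; gcongr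
    _ ≤ _ := by
        refine card_nsmul_le_sum _ _ _ fun i hi => ?_
        obtain ⟨hi, hbad⟩ := mem_sdiff.1 hi
        exact le_one_sub_stepFactor hy hj hbad ht (mem_Ico.1 hi).2

/-- A letter in `dyadicClass t` at a scale that is not bad has probability of order
`1 / (C * 2 ^ t)` and makes the greedy embedding jump over `2 ^ t` blocks, so every slow window
contributes equally. -/
lemma le_sum_one_sub_stepFactor (hy : ∀ v ≥ N, y v = P.K) (hj : P.δ * P.L ≤ #(block P.L U j))
    (hq : q / P.L ∉ P.congestedBlocks y N) :
    P.K * P.gain ≤ ∑ i ∈ range P.K, (1 - P.stepFactor U y j i q) := by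
  have hslow : (P.T : ℝ) ≤ 2 * #(P.slowWindows y (q / P.L)) :=
    mod_cast le_two_mul_card_slowWindows hy hq
  have hC : (0 : ℝ) < P.C := mod_cast P.C_pos
  set bad := badScales P.M (block P.L U j) P.K
  have hdisj : (P.slowWindows y (q / P.L) : Set ℕ).PairwiseDisjoint
      fun t => P.dyadicClass t \ bad := fun t _ t' _ htt' =>
    (pairwiseDisjoint_dyadicClass htt').mono sdiff_subset sdiff_subset
  calc P.K * P.gain = P.T / 2 * (P.b / 4) := by
        unfold K gain; push_cast; field_simp; ring
    _ ≤ #(P.slowWindows y (q / P.L)) • ((P.b : ℝ) / 4) := by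
        rw [nsmul_eq_mul]; gcongr; linarith
    _ ≤ ∑ t ∈ P.slowWindows y (q / P.L), ∑ i ∈ P.dyadicClass t \ bad,
          (1 - P.stepFactor U y j i q) :=
        card_nsmul_le_sum _ _ _ fun t ht => le_sum_dyadicClass hy hj ht
    _ = ∑ i ∈ (P.slowWindows y (q / P.L)).biUnion fun t => P.dyadicClass t \ bad,
          (1 - P.stepFactor U y j i q) := (sum_biUnion hdisj).symm
    _ ≤ _ := by
        refine sum_le_sum_of_subset_of_nonneg (biUnion_subset.2 fun t _ i hi => ?_)
          fun i _ _ => sub_nonneg.2 (stepFactor_le_one hy i)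
        exact mem_range.2 ((mem_Ico.1 (mem_sdiff.1 hi).1).2.trans_le (P.threshold_le_K t))

lemma sum_stepFactor_le (hy : ∀ v ≥ N, y v = P.K) (hj : P.δ * P.L ≤ #(block P.L U j))
    (hq : q / P.L ∉ P.congestedBlocks y N) :
    ∑ i : Fin P.K, P.stepFactor U y j i q ≤ P.K * Real.exp (-P.gain) := by
  have hsum := le_sum_one_sub_stepFactor hy hj hq
  rw [sum_sub_distrib, sum_const, card_range, nsmul_eq_mul, mul_one] at hsum
  rw [Fin.sum_univ_eq_sum_range (fun i => P.stepFactor U y j i q)]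
  have hexp : (P.K : ℝ) * (-P.gain + 1) ≤ P.K * Real.exp (-P.gain) := by
    gcongr; exact Real.add_one_le_exp _
  linarith

lemma charge_nonneg : 0 ≤ P.charge y N q := div_nonneg (Nat.cast_nonneg _) δ_mul_L_pos.le

lemma charge_antitone : Antitone (P.charge y N) := fun q q' h => by
  have := P.δ_pos
  unfold charge
  gcongr

lemma charge_zero_le : P.charge y N 0 ≤ 2 * #(P.congestedBlocks y N) / P.δ := by
  have hδ := P.δ_pos
  have hL : (0 : ℝ) < P.L := mod_cast P.L_pos
  have hcard : #(P.congestedPositions y N) ≤ #(P.congestedBlocks y N) * (2 * P.L) :=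
    card_biUnion_le_card_mul _ _ _ fun u _ => by rw [Nat.card_Ico, ← Nat.sub_mul]; simp
  calc P.charge y N 0 ≤ #(P.congestedBlocks y N) * (2 * P.L) / (P.δ * P.L) := by
        unfold charge
        gcongr
        simpa only [zero_le, filter_true] using mod_cast hcard
    _ = _ := by field_simp

lemma charge_add_one_le {d q' : ℕ} (hq : q / P.L ∈ P.congestedBlocks y N) (hd : P.δ * P.L ≤ d)
    (hdL : d ≤ P.L) (hq' : q + d ≤ q') : P.charge y N q' + 1 ≤ P.charge y N q := by
  have hwindow : Ico q (q + d) ⊆ P.congestedPositions y N := fun p hp => by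
    have hlow := Nat.div_mul_le_self q P.L
    have hhigh := Nat.lt_div_mul_add P.L_pos (a := q)
    exact mem_biUnion.2 ⟨_, hq, mem_Ico.2 (by rw [add_mul]; grind)⟩
  have hdisj : Disjoint {p ∈ P.congestedPositions y N | q' ≤ p} (Ico q (q + d)) :=
    disjoint_left.2 fun p hp hp' => by grind
  have hcard : #{p ∈ P.congestedPositions y N | q' ≤ p} + d ≤
      #{p ∈ P.congestedPositions y N | q ≤ p} := by
    have hle := card_le_card (union_subset (s := {p ∈ P.congestedPositions y N | q' ≤ p})
      (t := Ico q (q + d)) (u := {p ∈ P.congestedPositions y N | q ≤ p}) (by grind) (by grind))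
    rwa [card_union_of_disjoint hdisj, Nat.card_Ico, Nat.add_sub_cancel_left] at hle
  have hcard' : (#{p ∈ P.congestedPositions y N | q' ≤ p} : ℝ) + d ≤
      #{p ∈ P.congestedPositions y N | q ≤ p} := mod_cast hcard
  rw [charge, charge, div_add_one δ_mul_L_pos.ne', div_le_div_iff_of_pos_right δ_mul_L_pos]
  linarith

lemma card_denseBlocks_succ_of_dense (hj : P.δ * P.L ≤ #(block P.L U j)) :
    #(P.denseBlocks U (j + 1)) = #(P.denseBlocks U j) + 1 := by
  rw [denseBlocks, range_add_one, filter_insert, if_pos hj, card_insert_of_notMem (by simp),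
    denseBlocks]

lemma potential_next (i : ℕ) :
    P.potential U y N (j + 1) (P.next U y j i q) = P.stepFactor U y j i q *
      Real.exp (-P.decay * q +
        P.gain * (#(P.denseBlocks U (j + 1)) + P.charge y N (P.next U y j i q))) := by
  rw [potential, stepFactor, ← Real.exp_add]
  congr 1
  ring

lemma potential_next_le (hy : ∀ v ≥ N, y v = P.K) (i : ℕ)
    (hcharge : #(P.denseBlocks U (j + 1)) + P.charge y N (P.next U y j i q) ≤
      #(P.denseBlocks U j) + P.charge y N q) :
    P.potential U y N (j + 1) (P.next U y j i q) ≤ P.potential U y N j q := by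
  rw [potential_next]
  refine (mul_le_of_le_one_left (Real.exp_nonneg _) (stepFactor_le_one hy i)).trans ?_
  unfold potential
  gcongr
  exact gain_nonneg

lemma sum_potential_le (hy : ∀ v ≥ N, y v = P.K) (j q : ℕ) :
    ∑ i : Fin P.K, P.potential U y N (j + 1) (P.next U y j i q) ≤ P.K * P.potential U y N j q := by
  have hcharge : ∀ i, P.charge y N (P.next U y j i q) ≤ P.charge y N q := fun i =>
    charge_antitone (le_next hy i)
  have hterms (h : ∀ i, #(P.denseBlocks U (j + 1)) + P.charge y N (P.next U y j i q) ≤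
      #(P.denseBlocks U j) + P.charge y N q) :
      ∑ i : Fin P.K, P.potential U y N (j + 1) (P.next U y j i q) ≤
        P.K * P.potential U y N j q := by
    have := sum_le_card_nsmul (univ : Finset (Fin P.K)) _ _ fun i _ => potential_next_le hy i (h i)
    rwa [card_univ, Fintype.card_fin, nsmul_eq_mul] at this
  by_cases hj : P.δ * P.L ≤ #(block P.L U j)
  · have hdense : (#(P.denseBlocks U (j + 1)) : ℝ) = #(P.denseBlocks U j) + 1 :=
      mod_cast card_denseBlocks_succ_of_dense hj
    by_cases hq : q / P.L ∈ P.congestedBlocks y N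
    · refine hterms fun i => ?_
      have := charge_add_one_le hq hj (card_filter_div_eq_le U P.L_pos j)
        (add_card_block_le_next hy i)
      linarith
    · calc _ ≤ ∑ i : Fin P.K, P.stepFactor U y j i q *
              (Real.exp P.gain * P.potential U y N j q) := by
            refine sum_le_sum fun i _ => ?_
            rw [potential_next, hdense, potential, ← Real.exp_add]
            refine mul_le_mul_of_nonneg_left (Real.exp_le_exp.2 ?_) (Real.exp_nonneg _)
            nlinarith [hcharge i, gain_nonneg (P := P)]
        _ ≤ P.K * Real.exp (-P.gain) * (Real.exp P.gain * P.potential U y N j q) := by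
            rw [← sum_mul]
            gcongr
            · exact (mul_pos (Real.exp_pos _) (Real.exp_pos _)).le
            · exact sum_stepFactor_le hy hj hq
        _ = _ := by rw [Real.exp_neg]; field_simp
  · refine hterms fun i => ?_
    have hdense : P.denseBlocks U (j + 1) = P.denseBlocks U j := by
      rw [denseBlocks, range_add_one, filter_insert, if_neg hj, denseBlocks]
    rw [hdense]
    gcongr
    exact hcharge i

end Potential

/-! ### Admissible letter sequences -/

section Admissible

variable (P : CodeParams)

/-- The sequence `x` continued by the letter `K`. -/
def extend {K N : ℕ} (x : Fin N → Fin K) (v : ℕ) : ℕ := if h : v < N then x ⟨v, h⟩ else K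

/-- Up to a factor `2`, the number of pairs of a block `u` and a `t < T` which the letter `i` can
prevent from being a slow window. -/
def load (i : ℕ) : ℕ := ∑ t ∈ range P.T, if i < P.threshold t then 2 ^ t else 0

/-- The sequences whose mean load is at most `2 * T / C`, twice its expectation. -/
def admissible (N : ℕ) : Finset (Fin N → Fin P.K) := {x | P.C * ∑ v, P.load (x v) ≤ 2 * P.T * N}

variable {P} {U : Finset ℕ} {N : ℕ}

lemma extend_of_le {K v : ℕ} (x : Fin N → Fin K) (hv : N ≤ v) : extend x v = K :=
  dif_neg hv.not_gt

lemma extend_val {K : ℕ} (x : Fin N → Fin K) (v : Fin N) : extend x v = x v :=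
  dif_pos v.is_lt

lemma mul_sum_load : P.C * ∑ i : Fin P.K, P.load i = P.T * P.K := by
  have hsum : ∀ t ∈ range P.T,
      ∑ i ∈ range P.K, (if i < P.threshold t then 2 ^ t else 0) = 2 * P.b * 2 ^ P.T := by
    intro t ht
    have hfilter : {i ∈ range P.K | i < P.threshold t} = range (P.threshold t) := by
      have := P.threshold_le_K t
      grind
    rw [← sum_filter, hfilter, sum_const, card_range, smul_eq_mul, threshold, mul_assoc, ← pow_add,
      Nat.sub_add_cancel (mem_range.1 ht).le]
  unfold load
  rw [Fin.sum_univ_eq_sum_range fun i => ∑ t ∈ range P.T, if i < P.threshold t then 2 ^ t else 0,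
    sum_comm, sum_congr rfl hsum, sum_const, card_range, smul_eq_mul, K]
  ring

lemma mul_sum_sum_load :
    P.C * ∑ x : Fin N → Fin P.K, ∑ v, P.load (x v) = N * P.T * P.K ^ N := by
  have hpoint : ∀ v ∈ (univ : Finset (Fin N)),
      P.C * ∑ x : Fin N → Fin P.K, P.load (x v) = P.T * P.K ^ N := by
    intro v _
    have hsum := Fintype.sum_piFinset_apply (fun i : Fin P.K => P.load i) univ v
    rw [Fintype.piFinset_univ, smul_eq_mul, card_univ, Fintype.card_fin, Fintype.card_fin] at hsum
    calc _ = P.K ^ (N - 1) * (P.C * ∑ i : Fin P.K, P.load i) := by rw [hsum]; ring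
      _ = P.T * (P.K ^ (N - 1) * P.K) := by rw [mul_sum_load]; ring
      _ = _ := by rw [pow_sub_one_mul v.pos.ne']
  rw [sum_comm, mul_sum, sum_congr rfl hpoint, sum_const, card_univ, Fintype.card_fin,
    smul_eq_mul, mul_assoc]

lemma pow_le_two_mul_card_admissible (hN : 0 < N) : P.K ^ N ≤ 2 * #(P.admissible N) := by
  have hmarkov : #(P.admissible N)ᶜ * (2 * P.T * N) ≤ N * P.T * P.K ^ N := by
    calc #(P.admissible N)ᶜ * (2 * P.T * N)
        ≤ ∑ x ∈ (P.admissible N)ᶜ, P.C * ∑ v, P.load (x v) :=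
          card_nsmul_le_sum _ _ _ fun x hx => by
            rw [admissible, mem_compl, mem_filter_univ, not_le] at hx
            exact hx.le
      _ ≤ ∑ x : Fin N → Fin P.K, P.C * ∑ v, P.load (x v) :=
          sum_le_sum_of_subset (subset_univ _)
      _ = _ := by rw [← mul_sum, mul_sum_sum_load]
  have hcompl : 2 * #(P.admissible N)ᶜ ≤ P.K ^ N := by
    refine Nat.le_of_mul_le_mul_left (c := N * P.T) ?_ (mul_pos hN P.T_pos)
    linarith
  have hcard : #(P.admissible N) + #(P.admissible N)ᶜ = P.K ^ N := by
    rw [card_add_card_compl, Fintype.card_fun, Fintype.card_fin, Fintype.card_fin]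
  omega

lemma card_filter_notMem_slowWindows_le (y : Fin N → Fin P.K) {t : ℕ} (ht : t < P.T) :
    #{u ∈ range N | t ∉ P.slowWindows (extend y) u} ≤
      ∑ v : Fin N, 2 * if (y v : ℕ) < P.threshold t then 2 ^ t else 0 := by
  have hcover : {u ∈ range N | t ∉ P.slowWindows (extend y) u} ⊆
      ({v | (y v : ℕ) < P.threshold t} : Finset (Fin N)).biUnion
        fun v => Icc ((v : ℕ) - 2 ^ t) v := by
    intro u hu
    obtain ⟨s, hs, hlt⟩ : ∃ s ≤ 2 ^ t, extend y (u + s) < P.threshold t := by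
      simpa [slowWindows, ht] using (mem_filter.1 hu).2
    have hv : u + s < N := by
      by_contra! hle
      rw [extend_of_le y hle] at hlt
      exact hlt.not_ge (P.threshold_le_K t)
    refine mem_biUnion.2 ⟨⟨u + s, hv⟩, ?_, mem_Icc.2 (by grind)⟩
    rwa [mem_filter_univ, ← extend_val]
  calc _ ≤ ∑ v : Fin N with (y v : ℕ) < P.threshold t, #(Icc ((v : ℕ) - 2 ^ t) v) :=
        (card_le_card hcover).trans card_biUnion_le
    _ ≤ ∑ v : Fin N with (y v : ℕ) < P.threshold t, 2 * 2 ^ t :=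
        sum_le_sum fun v _ => by
          have := Nat.one_le_two_pow (n := t)
          rw [Nat.card_Icc]
          omega
    _ = _ := by simp only [sum_filter, mul_ite, mul_zero]

lemma mul_card_congestedBlocks_le {y : Fin N → Fin P.K} (hy : y ∈ P.admissible N) :
    P.C * #(P.congestedBlocks (extend y) N) ≤ 8 * N := by
  have hpairs : ∑ u ∈ range N, #(range P.T \ P.slowWindows (extend y) u) ≤
      2 * ∑ v, P.load (y v) := by
    calc _ = ∑ t ∈ range P.T, #{u ∈ range N | t ∉ P.slowWindows (extend y) u} := by
          simp only [sdiff_eq_filter]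
          exact sum_card_bipartiteAbove_eq_sum_card_bipartiteBelow _
      _ ≤ ∑ t ∈ range P.T, ∑ v : Fin N, 2 * if (y v : ℕ) < P.threshold t then 2 ^ t else 0 :=
          sum_le_sum fun t ht => card_filter_notMem_slowWindows_le y (mem_range.1 ht)
      _ = _ := by rw [sum_comm]; simp only [load, mul_sum]
  have hcongested : #(P.congestedBlocks (extend y) N) * P.T ≤
      2 * ∑ u ∈ range N, #(range P.T \ P.slowWindows (extend y) u) := by
    rw [mul_sum]
    refine (card_nsmul_le_sum _ _ _ fun u hu => ?_).trans
      (sum_le_sum_of_subset (filter_subset _ _))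
    have hslow := (mem_filter.1 hu).2
    have hsdiff := le_card_sdiff (P.slowWindows (extend y) u) (range P.T)
    rw [card_range] at hsdiff
    omega
  have hload : P.C * ∑ v, P.load (y v) ≤ 2 * P.T * N := (mem_filter.1 hy).2
  refine Nat.le_of_mul_le_mul_left (c := P.T) ?_ P.T_pos
  nlinarith

lemma charge_zero_le_of_mem_admissible {y : Fin N → Fin P.K} (hy : y ∈ P.admissible N) :
    P.charge (extend y) N 0 ≤ P.δ * N / 2 := by
  have hδ := P.δ_pos
  have hC : (0 : ℝ) < P.C := mod_cast P.C_pos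
  have hβ : (P.C : ℝ) * #(P.congestedBlocks (extend y) N) ≤ 8 * N :=
    mod_cast mul_card_congestedBlocks_le hy
  have hβ' : (#(P.congestedBlocks (extend y) N) : ℝ) ≤ P.δ ^ 2 * N / 4 := by
    refine le_of_mul_le_mul_left ?_ hC
    nlinarith [mul_le_mul_of_nonneg_right P.le_C_mul_δ_sq (Nat.cast_nonneg (α := ℝ) N)]
  calc _ ≤ 2 * #(P.congestedBlocks (extend y) N) / P.δ := charge_zero_le
    _ ≤ 2 * (P.δ ^ 2 * N / 4) / P.δ := by gcongr
    _ = _ := by field_simp; ring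

lemma le_card_denseBlocks (hU : ∀ p ∈ U, p < N * P.L) (hcard : 2 * P.δ * (N * P.L) ≤ #U) :
    P.δ * N ≤ #(P.denseBlocks U N) := by
  have hL : (0 : ℝ) < P.L := mod_cast P.L_pos
  have hblocks : #U = ∑ j ∈ range N, #(block P.L U j) :=
    card_eq_sum_card_fiberwise fun p hp =>
      mem_coe.2 (mem_range.2 ((Nat.div_lt_iff_lt_mul P.L_pos).2 (hU p hp)))
  have hle : (#U : ℝ) ≤ N * (P.δ * P.L) + #(P.denseBlocks U N) * P.L :=
    calc (#U : ℝ) = ∑ j ∈ range N, (#(block P.L U j) : ℝ) := mod_cast hblocks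
      _ ≤ ∑ j ∈ range N, (P.δ * P.L + if P.δ * P.L ≤ #(block P.L U j) then (P.L : ℝ) else 0) := by
          refine sum_le_sum fun j _ => ?_
          have hblock : (#(block P.L U j) : ℝ) ≤ P.L :=
            mod_cast card_filter_div_eq_le U P.L_pos j
          split_ifs with h
          · linarith [δ_mul_L_pos (P := P)]
          · linarith
      _ = _ := by
          rw [sum_add_distrib, ← sum_filter, sum_const, sum_const, card_range, nsmul_eq_mul,
            nsmul_eq_mul, denseBlocks]
  exact le_of_mul_le_mul_right (by linarith) hL

lemma four_div_le_gain_mul_δ : 4 / 2 ^ P.T ≤ P.gain * P.δ := by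
  have hC : (0 : ℝ) < P.C := mod_cast P.C_pos
  calc (4 : ℝ) / 2 ^ P.T = 64 * P.C / (16 * P.C * 2 ^ P.T) := by field_simp; norm_num
    _ ≤ P.T * P.δ / (16 * P.C * 2 ^ P.T) :=
        div_le_div_of_nonneg_right P.le_T_mul_δ (by positivity)
    _ = _ := by rw [gain]; ring

lemma decay_mul_length : P.decay * (N * P.L) = N / 2 ^ P.T := by
  have hL : (0 : ℝ) < P.L := mod_cast P.L_pos
  unfold decay
  field_simp

lemma potential_zero_le {y : Fin N → Fin P.K} (hy : y ∈ P.admissible N) :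
    P.potential U (extend y) N 0 0 ≤ Real.exp (P.gain * (P.δ * N / 2)) := by
  have hle := mul_le_mul_of_nonneg_left (charge_zero_le_of_mem_admissible hy) (gain_nonneg (P := P))
  simpa [potential, denseBlocks] using hle

lemma le_potential_of_le {q : ℕ} (y : ℕ → ℕ) (hU : ∀ p ∈ U, p < N * P.L)
    (hcard : 2 * P.δ * (N * P.L) ≤ #U) (hq : q ≤ N * P.L) :
    Real.exp (-P.decay * (N * P.L) + P.gain * (P.δ * N)) ≤ P.potential U y N N q := by
  have hq' : (q : ℝ) ≤ N * P.L := mod_cast hq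
  have hdense := le_card_denseBlocks hU hcard
  have hcharge := charge_nonneg (P := P) (y := y) (N := N) (q := q)
  have hdecay := mul_le_mul_of_nonneg_left hq' (decay_pos (P := P)).le
  exact Real.exp_le_exp.2 (add_le_add (by linarith)
    (mul_le_mul_of_nonneg_left (by linarith) gain_nonneg))

lemma greedyRun_word_le {x : Fin N → Fin P.K} {y : ℕ → ℕ}
    (h : Embeds U (P.word (extend x)) (P.word y) 0 (N * P.L)) :
    greedyRun (fun i : Fin P.K => squareWave (P.M ^ (i : ℕ))) (P.word y) P.L U x ≤ N * P.L :=
  greedyRun_le (fun p _ v hv => by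
    change squareWave (P.M ^ extend x (p / P.L)) p = _
    rw [hv, extend_val]) h

open Classical in
/-- The potential is large at the end of the greedy embedding whenever the embedding fits into the
word of `y`, while its mean is at most its small initial value. -/
theorem card_filter_embeds_le (hU : ∀ p ∈ U, p < N * P.L) (hcard : 2 * P.δ * (N * P.L) ≤ #U)
    {y : Fin N → Fin P.K} (hy : y ∈ P.admissible N) :
    (#{x : Fin N → Fin P.K |
      Embeds U (P.word (extend x)) (P.word (extend y)) 0 (N * P.L)} : ℝ) ≤
      (P.K : ℝ) ^ N * Real.exp (-P.decay * (N * P.L)) := by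
  set good : Finset (Fin N → Fin P.K) :=
    {x | Embeds U (P.word (extend x)) (P.word (extend y)) 0 (N * P.L)}
  let run (x : Fin N → Fin P.K) : ℕ :=
    greedyRun (fun i : Fin P.K => squareWave (P.M ^ (i : ℕ))) (P.word (extend y)) P.L U x
  have hmean : ∑ x, P.potential U (extend y) N N (run x) ≤
      (P.K : ℝ) ^ N * P.potential U (extend y) N 0 0 := by
    have hmean := sum_foldl_le (V := P.potential U (extend y) N)
      (step := fun j (i : Fin P.K) q => P.next U (extend y) j i q)
      (fun j q => by
        rw [Fintype.card_fin]
        exact sum_potential_le (fun _ hv => extend_of_le y hv) j q) 0 N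
    rwa [Fintype.card_fin] at hmean
  have hlast : #good * Real.exp (-P.decay * (N * P.L) + P.gain * (P.δ * N)) ≤
      ∑ x, P.potential U (extend y) N N (run x) := by
    rw [← nsmul_eq_mul]
    refine (card_nsmul_le_sum good _ _ fun x hx => ?_).trans
      (sum_le_univ_sum_of_nonneg fun x => (Real.exp_pos _).le)
    exact le_potential_of_le _ hU hcard (greedyRun_word_le (mem_filter.1 hx).2)
  have hinit : P.potential U (extend y) N 0 0 ≤ Real.exp (-P.decay * (N * P.L)) *
      Real.exp (-P.decay * (N * P.L) + P.gain * (P.δ * N)) := by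
    refine (potential_zero_le hy).trans ?_
    rw [← Real.exp_add, Real.exp_le_exp, neg_mul, decay_mul_length]
    have hgain := mul_le_mul_of_nonneg_left (four_div_le_gain_mul_δ (P := P)) (Nat.cast_nonneg N)
    linarith [show (N : ℝ) * (4 / 2 ^ P.T) = 4 * (N / 2 ^ P.T) by ring]
  refine le_of_mul_le_mul_right ?_
    (Real.exp_pos (-P.decay * (N * P.L) + P.gain * (P.δ * N)))
  calc _ ≤ (P.K : ℝ) ^ N * P.potential U (extend y) N 0 0 := hlast.trans hmean
    _ ≤ _ := by rw [mul_assoc]; gcongr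

end Admissible

end CodeParams

/-! ### Subsequences and unique decoding -/

section Subsequences

variable {α : Type*}

lemma exists_strictMonoOn_of_map_eq {ι κ : Type*} [Preorder ι] [Preorder κ] [Nonempty κ]
    {X : ι → α} {Y : κ → α} {l : List ι} {l' : List κ} (hl : l.Pairwise (· < ·))
    (hl' : l'.Pairwise (· < ·)) (h : l.map X = l'.map Y) :
    ∃ φ : ι → κ, StrictMonoOn φ {x | x ∈ l} ∧ ∀ x ∈ l, φ x ∈ l' ∧ Y (φ x) = X x := by
  classical
  induction l generalizing l' with
  | nil => exact ⟨fun _ => Classical.arbitrary κ, by simp [StrictMonoOn], by simp⟩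
  | cons x l ih =>
    obtain ⟨x', l', rfl⟩ : ∃ x' k', l' = x' :: k' := List.exists_cons_of_ne_nil (by grind)
    rw [List.map_cons, List.map_cons, List.cons_eq_cons] at h
    rw [List.pairwise_cons] at hl hl'
    obtain ⟨φ, hmono, hφ⟩ := ih hl.2 hl'.2 h.2
    have hne : ∀ v ∈ l, v ≠ x := fun v hv => (hl.1 v hv).ne'
    refine ⟨Function.update φ x x', fun u hu v hv huv => ?_, fun u hu => ?_⟩
    · have hvl : v ∈ l := (List.mem_cons.1 hv).resolve_left fun hvx =>
        (List.mem_cons.1 hu).elim (fun hux => (hvx ▸ hux ▸ huv).false)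
          fun hul => (huv.trans_eq hvx).not_gt (hl.1 u hul)
      rw [Function.update_of_ne (hne v hvl)]
      rcases List.mem_cons.1 hu with rfl | hul
      · rw [Function.update_self]
        exact hl'.1 _ (hφ v hvl).1
      · rw [Function.update_of_ne (hne u hul)]
        exact hmono hul hvl huv
    · rcases List.mem_cons.1 hu with rfl | hul
      · rw [Function.update_self]
        exact ⟨List.mem_cons_self, h.1.symm⟩
      · rw [Function.update_of_ne (hne u hul)]
        exact ⟨List.mem_cons_of_mem _ (hφ u hul).1, (hφ u hul).2⟩

lemma embeds_of_sublist {n : ℕ} {τ : Finset (Fin n)} {X Y : ℕ → α}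
    (h : (applyDel τ fun i => X i) <+ List.ofFn fun i : Fin n => Y i) :
    Embeds (τᶜ.map Fin.valEmbedding) X Y 0 n := by
  set l : List ℕ := ((List.finRange n).filter fun i => i ∉ τ).map Fin.val
  have hsorted : l.Pairwise (· < ·) :=
    List.pairwise_map.2 ((List.pairwise_lt_finRange n).sublist List.filter_sublist)
  have hmem : ∀ x ∈ τᶜ.map Fin.valEmbedding, x ∈ l := by simp [l]
  have hword : (applyDel τ fun i => X i) = l.map X := by
    rw [applyDel, List.map_map, Function.comp_def]
  have hofFn : (List.ofFn fun i : Fin n => Y i) = (List.range n).map Y := by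
    rw [List.ofFn_eq_map, ← List.map_coe_finRange_eq_range, List.map_map, Function.comp_def]
  rw [hword, hofFn] at h
  obtain ⟨l', hl', heq⟩ := List.sublist_map_iff.1 h
  obtain ⟨φ, hmono, hφ⟩ :=
    exists_strictMonoOn_of_map_eq hsorted (List.pairwise_lt_range.sublist hl') heq
  refine ⟨φ, hmono.mono hmem, fun x hx => ?_⟩
  obtain ⟨hmem', hval⟩ := hφ x (hmem x hx)
  exact ⟨mem_Ico.2 ⟨Nat.zero_le _, List.mem_range.1 (hl'.subset hmem')⟩, hval⟩

lemma applyDel_sublist {n : ℕ} (τ : Finset (Fin n)) (w : Fin n → α) :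
    applyDel τ w <+ List.ofFn w := by
  rw [applyDel, List.ofFn_eq_map]
  exact List.filter_sublist.map w

/-- The decoder returns any message one of whose words contains the received word. -/
lemma exists_decoder {I κ : Type*} {n : ℕ} (c : I → κ → Fin n → α) :
    ∃ Dec : List α → Option I, ∀ τ m ω, Dec (applyDel τ (c m ω)) ≠ some m →
      ∃ m' ≠ m, ∃ ω', applyDel τ (c m ω) <+ List.ofFn (c m' ω') := by
  classical
  refine ⟨fun l => if h : ∃ m ω, l <+ List.ofFn (c m ω) then some h.choose else none,
    fun τ m ω hω => ?_⟩
  have hex : ∃ m' ω', applyDel τ (c m ω) <+ List.ofFn (c m' ω') := ⟨m, ω, applyDel_sublist τ _⟩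
  beta_reduce at hω
  rw [dif_pos hex] at hω
  exact ⟨hex.choose, fun h => hω (congrArg some h), hex.choose_spec⟩

end Subsequences

/-! ### Random coding -/

section RandomCoding

open Classical in
lemma card_filter_lt_card_filter_mem_le {κ W : Type*} [Fintype κ] [Fintype W] {Q : Finset W}
    {a : ℝ} (s : ℝ) (ha : 0 ≤ a) (hQ : Real.exp a * #Q ≤ Fintype.card W) :
    (#{v : κ → W | s < #{ω | v ω ∈ Q}} : ℝ) ≤
      2 ^ Fintype.card κ * Real.exp (-(a * s)) * Fintype.card (κ → W) := by
  set f : W → ℝ := fun w => if w ∈ Q then Real.exp a else 1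
  have hf : ∀ w, 0 ≤ f w := fun w => by positivity
  have hprod : ∀ v : κ → W, ∏ ω, f (v ω) = Real.exp (a * #{ω | v ω ∈ Q}) := fun v => by
    rw [prod_ite, prod_const, prod_const_one, mul_one, ← Real.exp_nat_mul, mul_comm]
  have hsum : ∑ w, f w ≤ 2 * Fintype.card W :=
    calc ∑ w, f w ≤ ∑ w, ((if w ∈ Q then Real.exp a else 0) + 1) :=
          sum_le_sum fun w _ => by simp only [f]; split_ifs <;> linarith
      _ = Real.exp a * #Q + Fintype.card W := by
          rw [sum_add_distrib, ← sum_filter]; simp [mul_comm]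
      _ ≤ _ := by linarith
  have hmarkov : #{v : κ → W | s < #{ω | v ω ∈ Q}} * Real.exp (a * s) ≤
      (2 * Fintype.card W : ℝ) ^ Fintype.card κ :=
    calc _ ≤ ∑ v : κ → W with s < #{ω | v ω ∈ Q}, ∏ ω, f (v ω) := by
          rw [← nsmul_eq_mul]
          refine card_nsmul_le_sum _ _ _ fun v hv => ?_
          rw [hprod]
          exact Real.exp_le_exp.2 (mul_le_mul_of_nonneg_left (mem_filter.1 hv).2.le ha)
      _ ≤ ∑ v : κ → W, ∏ ω, f (v ω) :=
          sum_le_univ_sum_of_nonneg fun v => prod_nonneg fun ω _ => hf _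
      _ = (∑ w, f w) ^ Fintype.card κ := by
          rw [← card_univ, ← prod_const, Fintype.prod_sum]
      _ ≤ _ := pow_le_pow_left₀ (sum_nonneg fun w _ => hf w) hsum _
  calc _ ≤ (2 * Fintype.card W : ℝ) ^ Fintype.card κ / Real.exp (a * s) :=
        (le_div_iff₀ (Real.exp_pos _)).2 hmarkov
    _ = _ := by rw [Real.exp_neg, Fintype.card_fun, Nat.cast_pow, mul_pow]; ring

open Classical in
/-- Exchanging the coordinate `m` with a fresh value is an involution. -/
lemma card_le_of_card_filter_update_le {I V : Type*} [Fintype I] [Fintype V] [Nonempty V] (m : I)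
    {B : Finset (I → V)} {β : ℝ}
    (h : ∀ c, (#{v | Function.update c m v ∈ B} : ℝ) ≤ β * Fintype.card V) :
    (#B : ℝ) ≤ β * Fintype.card (I → V) := by
  let swap (p : (I → V) × V) : (I → V) × V := (Function.update p.1 m p.2, p.1 m)
  have hswap : Function.Involutive swap := fun p => by simp [swap]
  have hcount : ∑ c : I → V, #{v | Function.update c m v ∈ B} = Fintype.card V * #B :=
    calc _ = ∑ p : (I → V) × V, if (swap p).1 ∈ B then 1 else 0 := by
          simp only [card_filter]
          exact (Fintype.sum_prod_type' fun c v => if Function.update c m v ∈ B then 1 else 0).symm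
      _ = ∑ p : (I → V) × V, if p.1 ∈ B then 1 else 0 :=
          Equiv.sum_comp hswap.toPerm fun p => if p.1 ∈ B then 1 else 0
      _ = _ := by rw [Fintype.sum_prod_type_right]; simp
  refine le_of_mul_le_mul_left (a := (Fintype.card V : ℝ)) ?_ (mod_cast Fintype.card_pos)
  calc (Fintype.card V : ℝ) * #B = ∑ c : I → V, (#{v | Function.update c m v ∈ B} : ℝ) :=
        mod_cast hcount.symm
    _ ≤ Fintype.card (I → V) • (β * Fintype.card V) := sum_le_card_nsmul _ _ _ fun c _ => h c
    _ = _ := by rw [nsmul_eq_mul]; ring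

open Classical in
/-- The random choices `ω` with which the code `c` encodes the message `m` into a word that stands
in the relation `r` (confusability) to a word of another message. -/
noncomputable def confusedChoices {I κ W : Type*} [Fintype κ] (r : W → W → Prop) (c : I → κ → W)
    (m : I) : Finset κ := {ω | ∃ m' ≠ m, ∃ ω', r (c m ω) (c m' ω')}

lemma mem_confusedChoices {I κ W : Type*} [Fintype κ] {r : W → W → Prop} {c : I → κ → W} {m : I}
    {ω : κ} : ω ∈ confusedChoices r c m ↔ ∃ m' ≠ m, ∃ ω', r (c m ω) (c m' ω') := by
  simp [confusedChoices]

variable {I κ W : Type*} [Fintype I] [Fintype κ] [Fintype W] {a s ρ : ℝ}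

open Classical in
/-- The words of `m` are independent of those of the other messages, which fix the set `Q` of
confusable words. -/
lemma card_filter_lt_card_confusedChoices_le [Nonempty W] {r : W → W → Prop} [DecidableRel r]
    (m : I) (s : ℝ) (ha : 0 ≤ a) (hr : ∀ y, (#{x | r x y} : ℝ) ≤ ρ * Fintype.card W)
    (hexp : Real.exp a * (Fintype.card I * Fintype.card κ * ρ) ≤ 1) :
    (#{c : I → κ → W | s < #(confusedChoices r c m)} : ℝ) ≤
      2 ^ Fintype.card κ * Real.exp (-(a * s)) * Fintype.card (I → κ → W) := by
  refine card_le_of_card_filter_update_le m fun c => ?_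
  set Q : Finset W := univ.biUnion fun p : I × κ => {x | r x (c p.1 p.2)}
  have hQ : (#Q : ℝ) ≤ Fintype.card I * Fintype.card κ * (ρ * Fintype.card W) :=
    calc (#Q : ℝ) ≤ ∑ p : I × κ, (#{x | r x (c p.1 p.2)} : ℝ) := mod_cast card_biUnion_le
      _ ≤ Fintype.card (I × κ) • (ρ * Fintype.card W) := sum_le_card_nsmul _ _ _ fun p _ => hr _
      _ = _ := by rw [nsmul_eq_mul, Fintype.card_prod, Nat.cast_mul]
  have hexpQ : Real.exp a * #Q ≤ Fintype.card W :=
    calc Real.exp a * #Q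
        ≤ Real.exp a * (Fintype.card I * Fintype.card κ * (ρ * Fintype.card W)) := by gcongr
      _ = Real.exp a * (Fintype.card I * Fintype.card κ * ρ) * Fintype.card W := by ring
      _ ≤ Fintype.card W := mul_le_of_le_one_left (Nat.cast_nonneg _) hexp
  have hconfused : ∀ v : κ → W,
      #(confusedChoices r (Function.update c m v) m) ≤ #{ω | v ω ∈ Q} := fun v => by
    refine card_le_card fun ω hω => ?_
    obtain ⟨m', hm', ω', h⟩ := mem_confusedChoices.1 hω
    rw [Function.update_self, Function.update_of_ne hm'] at h
    exact mem_filter.2 ⟨mem_univ _, mem_biUnion.2 ⟨(m', ω'), mem_univ _, by simpa using h⟩⟩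
  refine le_trans (mod_cast card_le_card fun v hv => ?_)
    (card_filter_lt_card_filter_mem_le s ha hexpQ)
  simp only [mem_filter_univ] at hv ⊢
  exact hv.trans_le (mod_cast hconfused v)

lemma exists_code {J : Type*} [Fintype J] [Nonempty W] {r : J → W → W → Prop}
    [∀ τ, DecidableRel (r τ)] (ha : 0 ≤ a)
    (hr : ∀ τ y, (#{x | r τ x y} : ℝ) ≤ ρ * Fintype.card W)
    (hexp : Real.exp a * (Fintype.card I * Fintype.card κ * ρ) ≤ 1)
    (hunion : Fintype.card J * Fintype.card I * (2 ^ Fintype.card κ * Real.exp (-(a * s))) < 1) :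
    ∃ c : I → κ → W, ∀ τ m, (#(confusedChoices (r τ) c m) : ℝ) ≤ s := by
  classical
  by_contra! hcon
  let bad (p : J × I) : Finset (I → κ → W) := {c | s < #(confusedChoices (r p.1) c p.2)}
  have hbad : ∀ p ∈ univ, (#(bad p) : ℝ) ≤
      2 ^ Fintype.card κ * Real.exp (-(a * s)) * Fintype.card (I → κ → W) := fun p _ =>
    card_filter_lt_card_confusedChoices_le p.2 s ha (hr p.1) hexp
  have hcover : (univ : Finset (I → κ → W)) ⊆ univ.biUnion bad := fun c _ => by
    obtain ⟨τ, m, h⟩ := hcon c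
    exact mem_biUnion.2 ⟨(τ, m), mem_univ _, mem_filter.2 ⟨mem_univ _, h⟩⟩
  have hpos : (0 : ℝ) < Fintype.card (I → κ → W) := mod_cast Fintype.card_pos
  refine (mul_lt_of_lt_one_left hpos hunion).not_ge ?_
  calc (Fintype.card (I → κ → W) : ℝ) ≤ ∑ p, (#(bad p) : ℝ) :=
        mod_cast (card_le_card hcover).trans card_biUnion_le
    _ ≤ Fintype.card (J × I) •
          (2 ^ Fintype.card κ * Real.exp (-(a * s)) * Fintype.card (I → κ → W)) :=
        sum_le_card_nsmul _ _ _ hbad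
    _ = _ := by rw [nsmul_eq_mul, Fintype.card_prod, Nat.cast_mul]; ring

lemma exp_half_mul_le_one {A D k : ℝ} (hA : A ≤ Real.exp (D / 4)) (hk : 8 * k ≤ D) (hk0 : 0 ≤ k) :
    Real.exp (D / 2) * (A * k * (2 * Real.exp (-D))) ≤ 1 :=
  calc _ = Real.exp (D / 2) * (A * (2 * k) * Real.exp (-D)) := by ring
    _ ≤ Real.exp (D / 2) * (Real.exp (D / 4) * Real.exp (D / 4) * Real.exp (-D)) := by
        gcongr
        linarith [Real.add_one_le_exp (D / 4)]
    _ = 1 := by simp only [← Real.exp_add]; rw [Real.exp_eq_one_iff]; ring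

lemma mul_two_pow_mul_exp_neg_lt_one {A B n D s : ℝ} {k : ℕ} (hA0 : 0 ≤ A)
    (hA : A ≤ Real.exp (D / 4)) (hB : B ≤ Real.exp n) (h : n + D / 4 + k < D / 2 * s) :
    B * A * (2 ^ k * Real.exp (-(D / 2 * s))) < 1 :=
  calc _ ≤ Real.exp n * Real.exp (D / 4) * (Real.exp k * Real.exp (-(D / 2 * s))) := by
        gcongr
        exact two_pow_le_exp k
    _ = Real.exp (n + D / 4 + (k - D / 2 * s)) := by
        rw [sub_eq_add_neg]; simp only [Real.exp_add]
    _ < 1 := by rw [Real.exp_lt_one_iff]; linarith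

end RandomCoding

/-! ### The code -/

namespace CodeParams

variable {P : CodeParams} {N : ℕ}

variable (P) in
/-- The codeword of the letter sequence `x`: one block of `L` bits for each letter. -/
def codeword (x : Fin N → Fin P.K) (p : Fin (N * P.L)) : Bool := P.word (extend x) p

lemma card_filter_sublist_le (hN : 0 < N) {τ : Finset (Fin (N * P.L))}
    (hτ : 2 * P.δ * (N * P.L) ≤ #τᶜ) (y : P.admissible N) :
    (#{x : P.admissible N | applyDel τ (P.codeword x.1) <+ List.ofFn (P.codeword y.1)} : ℝ) ≤
      2 * Real.exp (-P.decay * (N * P.L)) * Fintype.card (P.admissible N) := by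
  classical
  have hsub : #{x : P.admissible N | applyDel τ (P.codeword x.1) <+ List.ofFn (P.codeword y.1)} ≤
      #{x | Embeds (τᶜ.map Fin.valEmbedding) (P.word (extend x)) (P.word (extend y.1)) 0
        (N * P.L)} :=
    card_le_card_of_injOn Subtype.val
      (fun x hx => by simpa using embeds_of_sublist (mem_filter.1 hx).2)
      Subtype.val_injective.injOn
  have hcard : (P.K : ℝ) ^ N ≤ 2 * Fintype.card (P.admissible N) := by
    rw [Fintype.card_coe]
    exact mod_cast pow_le_two_mul_card_admissible hN
  calc _ ≤ (P.K : ℝ) ^ N * Real.exp (-P.decay * (N * P.L)) :=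
        (Nat.cast_le.2 hsub).trans
          (card_filter_embeds_le (by simp) (by rwa [card_map]) y.2)
    _ ≤ 2 * Fintype.card (P.admissible N) * Real.exp (-P.decay * (N * P.L)) := by gcongr
    _ = _ := by ring

lemma nonempty_admissible (hN : 0 < N) : Nonempty (P.admissible N) := by
  have := pow_le_two_mul_card_admissible (P := P) hN
  have := pow_pos P.K_pos N
  exact (card_pos.1 (by omega)).to_subtype

lemma card_subtype_finset_le_exp (n : ℕ) (p : Finset (Fin n) → Prop) [DecidablePred p] :
    (Fintype.card {τ // p τ} : ℝ) ≤ Real.exp n := by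
  have hle := Fintype.card_subtype_le p
  rw [Fintype.card_finset, Fintype.card_fin] at hle
  calc _ ≤ (2 : ℝ) ^ n := mod_cast hle
    _ ≤ _ := two_pow_le_exp n

theorem exists_code_card_confusedChoices_le {k r : ℕ} {ε : ℝ} (hN : 0 < N)
    (hk : (k : ℝ) ≤ N * P.L) (hk' : 8 * k ≤ P.decay * (N * P.L))
    (hr : r ≤ P.decay * (N * P.L) / 4) (hε : 4 + P.decay / 2 < P.decay * ε * k) :
    ∃ c : (Fin r → Bool) → Fin k → Fin (N * P.L) → Bool,
      ∀ τ : Finset (Fin (N * P.L)), 2 * P.δ * (N * P.L) ≤ #τᶜ →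
        ∀ m, (#(confusedChoices (fun v w => applyDel τ v <+ List.ofFn w) c m) : ℝ) ≤ ε * k := by
  have := nonempty_admissible (P := P) hN
  have hn : (0 : ℝ) < N * P.L := mod_cast mul_pos hN P.L_pos
  have hI : (Fintype.card (Fin r → Bool) : ℝ) ≤ Real.exp (P.decay * (N * P.L) / 4) := by
    rw [Fintype.card_fun, Fintype.card_bool, Fintype.card_fin, Nat.cast_pow, Nat.cast_ofNat]
    exact (two_pow_le_exp r).trans (Real.exp_le_exp.2 hr)
  have hJ : (Fintype.card {τ : Finset (Fin (N * P.L)) // 2 * P.δ * (N * P.L) ≤ #τᶜ} : ℝ) ≤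
      Real.exp (N * P.L) :=
    mod_cast card_subtype_finset_le_exp _ _
  obtain ⟨c, hc⟩ := exists_code (I := Fin r → Bool) (κ := Fin k) (a := P.decay * (N * P.L) / 2)
    (s := ε * k) (r := fun (τ : {τ : Finset (Fin (N * P.L)) // 2 * P.δ * (N * P.L) ≤ #τᶜ})
      (x y : P.admissible N) => applyDel τ.1 (P.codeword x.1) <+ List.ofFn (P.codeword y.1))
    (by linarith [Nat.cast_nonneg (α := ℝ) k])
    (fun τ => card_filter_sublist_le hN τ.2)
    (by
      rw [Fintype.card_fin, neg_mul]
      exact exp_half_mul_le_one hI hk' k.cast_nonneg)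
    (by
      rw [Fintype.card_fin]
      refine mul_two_pow_mul_exp_neg_lt_one (Nat.cast_nonneg _) hI hJ ?_
      nlinarith [mul_lt_mul_of_pos_right hε hn])
  exact ⟨fun m ω => P.codeword (c m ω), fun τ hτ => hc ⟨τ, hτ⟩⟩

theorem exists_stochastic_code (P : CodeParams) {ε : ℝ} (hε : 0 < ε) (n₀ : ℕ) :
    ∃ n ≥ n₀, ∃ k : ℕ, 0 < k ∧ ∃ c : (Fin ⌊P.decay / 4 * n⌋₊ → Bool) → Fin k → Fin n → Bool,
      ∀ τ : Finset (Fin n), 2 * P.δ * n ≤ #τᶜ →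
        ∀ m, (#(confusedChoices (fun v w => applyDel τ v <+ List.ofFn w) c m) : ℝ) ≤ ε * k := by
  have hdecay := P.decay_pos
  obtain ⟨k, hk⟩ := exists_nat_gt ((4 + P.decay / 2) / (P.decay * ε))
  have hk₀ : (0 : ℝ) < k := lt_trans (by positivity) hk
  rw [div_lt_iff₀' (by positivity)] at hk
  obtain ⟨N, hN⟩ := exists_nat_gt (max (n₀ : ℝ) (max k (8 * k / P.decay)))
  obtain ⟨hNn₀, hNk, hNk'⟩ : (n₀ : ℝ) < N ∧ (k : ℝ) < N ∧ 8 * k / P.decay < N := by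
    simpa only [max_lt_iff] using hN
  rw [div_lt_iff₀' hdecay] at hNk'
  have hNL : (N : ℝ) ≤ N * P.L := mod_cast Nat.le_mul_of_pos_right N P.L_pos
  have hNL' := mul_le_mul_of_nonneg_left hNL hdecay.le
  have hfloor : (⌊P.decay / 4 * (N * P.L : ℕ)⌋₊ : ℝ) ≤ P.decay * (N * P.L) / 4 :=
    (Nat.floor_le (by positivity)).trans_eq (by push_cast; ring)
  have hcode := exists_code_card_confusedChoices_le (mod_cast hk₀.trans hNk)
    (hNk.le.trans hNL) (hNk'.le.trans hNL') hfloor hk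
  simp only [← Nat.cast_mul] at hcode hNL
  exact ⟨N * P.L, mod_cast hNn₀.le.trans hNL, k, mod_cast hk₀, hcode⟩

end CodeParams

/-- For every `p ∈ (0,1)` there exists a rate `R > 0` such that for every `ε > 0` there
are infinitely many `n` admitting a stochastic code of block length `n` and rate `R`
(with private encoder randomness ranging over a nonempty finite set `Fin k`) that
corrects every oblivious pattern of `⌊pn⌋` deletions except with probability `ε` over
the encoder's randomness, for every message. -/
theorem oblivious_stochastic_codes :
    ∀ p : ℝ, 0 < p → p < 1 → ∃ R : ℝ, 0 < R ∧
      ∀ ε : ℝ, 0 < ε → ∀ n₀ : ℕ, ∃ n ≥ n₀, ∃ k : ℕ, 0 < k ∧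
        ∃ Enc : (Fin ⌊R * (n : ℝ)⌋₊ → Bool) → Fin k → (Fin n → Bool),
        ∃ Dec : List Bool → Option (Fin ⌊R * (n : ℝ)⌋₊ → Bool),
          ∀ τ : Finset (Fin n), τ.card = ⌊p * (n : ℝ)⌋₊ →
            ∀ m : Fin ⌊R * (n : ℝ)⌋₊ → Bool,
              ((Finset.univ.filter
                  (fun ω : Fin k => Dec (applyDel τ (Enc m ω)) ≠ some m)).card : ℝ)
                ≤ ε * k := by
  intro p hp₀ hp₁
  obtain ⟨P, hP⟩ := exists_codeParams (δ := (1 - p) / 2) (by linarith)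
  refine ⟨P.decay / 4, div_pos P.decay_pos four_pos, fun ε hε n₀ => ?_⟩
  obtain ⟨n, hn, k, hk, c, hc⟩ := P.exists_stochastic_code hε n₀
  obtain ⟨Dec, hDec⟩ := exists_decoder c
  refine ⟨n, hn, k, hk, c, Dec, fun τ hτ m => ?_⟩
  have hdense : 2 * P.δ * n ≤ #τᶜ := by
    have hfloor := Nat.floor_le (mul_nonneg hp₀.le n.cast_nonneg)
    have hcard : (#τ + #τᶜ : ℝ) = n := mod_cast (card_add_card_compl τ).trans (Fintype.card_fin n)
    rw [hτ] at hcard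
    rw [hP]
    linarith
  have hsub : ({ω | Dec (applyDel τ (c m ω)) ≠ some m} : Finset (Fin k)) ⊆
      confusedChoices (fun v w => applyDel τ v <+ List.ofFn w) c m := fun ω hω =>
    mem_confusedChoices.2 (hDec τ m ω (mem_filter.1 hω).2)
  exact (Nat.cast_le.2 (card_le_card hsub)).trans (hc τ hdense m)
end

section
/- Fix integers K ≥ 1, λ ≥ 1 with λ−1 ≤ K, positive integers s, t, and m, n ≥ 1. For every Y ∈ {1,…,K}^n and every choice of subsets S_1,…,S_m ⊆ {1,…,K} each of size exactly λ−1, the number of X ∈ {1,…,K}^m with X ≺_{(s,t,S_1,…,S_m)} Y is at most the number of X ∈ {1,…,K}^m with X ≺_{(s,t,[λ−1],…,[λ−1])} Y, where [λ−1] = {1,…,λ−1} is repeated m times. -/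
/-!
The proof is a coupling. Let two matchings on the same lattice be such that every type-A pair of the
first is a type-A pair of the second, and run them simultaneously, so that they stay on a common
antidiagonal `a + b = const`. Then the second never falls behind in the `a`-coordinate. Indeed, if
the paths separate and meet again, then at the meeting point the second has just made a B-move and
the first an A-move, so that the bound `s` on A-runs and the bound `t` on B-runs both favour A-moves
of the second; hence, while they stay together, an A-move of the first forces one of the second.
Thus success of the first matching carries over to the second.

Now map `X` to `X'` by applying to the `i`-th coordinate the permutation of `{1,…,K}` that sends
`S_i` onto `[|S_i|]` and the complement of `S_i` onto the complement of `[|S_i|]`, increasingly on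
each. It does not decrease any element outside `S_i`, so every type-A pair for `X` and the sets
`S_i` is a type-A pair for `X'` and the sets `[|S_i|]`.
-/

open scoped Classical

/-- The pair `(a,b)` (1-indexed positions in `X`, `Y`) is type-A: `X_a ∈ S_a` or
`X_a ≥ Y_b`. -/
def typeA (S : List (Finset ℕ)) (X Y : List ℕ) (a b : ℕ) : Bool :=
  decide (X.getD (a - 1) 0 ∈ S.getD (a - 1) ∅ ∨ Y.getD (b - 1) 0 ≤ X.getD (a - 1) 0)

/-- One run of the matching process, with fuel. -/
def mRun (s t : ℕ) (S : List (Finset ℕ)) (X Y : List ℕ) :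
    ℕ → ℕ × ℕ × ℕ × ℕ → ℕ × ℕ
  | 0, (a, b, _, _) => (a, b)
  | fuel + 1, (a, b, ca, cb) =>
      if a = X.length ∨ b = Y.length then (a, b)
      else if ca < s ∧ (t ≤ cb ∨ typeA S X Y a b = true) then
        mRun s t S X Y fuel (a + 1, b, ca + 1, 0)
      else
        mRun s t S X Y fuel (a, b + 1, 0, cb + 1)

/-- `X ≺_{(s,t,S_1,…,S_m)} Y` : the matching of `X` with `Y` succeeds. -/
def matchable (s t : ℕ) (S : List (Finset ℕ)) (X Y : List ℕ) : Prop :=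
  (mRun s t S X Y (X.length + Y.length) (1, 1, 0, 0)).1 = X.length

section Coupling

variable {s t : ℕ} {S S' : List (Finset ℕ)} {X X' Y : List ℕ}
  {A A' : ℕ → ℕ → Bool} {p q : ℕ × ℕ × ℕ × ℕ}

/-- One move of the matching process for the type-A pairs `A`. A state `(a, b, ca, cb)`, as in
`mRun`, is a position together with the lengths of the current runs of A-moves and of B-moves. -/
def matchStep (s t : ℕ) (A : ℕ → ℕ → Bool) : ℕ × ℕ × ℕ × ℕ → ℕ × ℕ × ℕ × ℕ
  | (a, b, ca, cb) =>
      if ca < s ∧ (t ≤ cb ∨ A a b) then (a + 1, b, ca + 1, 0) else (a, b + 1, 0, cb + 1)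

/-- The invariant of the coupling: `q` is weakly ahead of `p` in the `a`-coordinate on the same
antidiagonal and, if the positions coincide, the run lengths of `q` favour A-moves at least as much
as those of `p`. -/
structure IsAhead (p q : ℕ × ℕ × ℕ × ℕ) : Prop where
  antidiagonal : p.1 + p.2.1 = q.1 + q.2.1
  fst_le : p.1 ≤ q.1
  aRun_le : p.1 = q.1 → q.2.2.1 ≤ p.2.2.1
  bRun_le : p.1 = q.1 → p.2.2.2 ≤ q.2.2.2

theorem IsAhead.refl (p : ℕ × ℕ × ℕ × ℕ) : IsAhead p p :=
  ⟨rfl, le_rfl, fun _ => le_rfl, fun _ => le_rfl⟩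

theorem IsAhead.step (hA : ∀ a b, A a b → A' a b) (h : IsAhead p q) :
    IsAhead (matchStep s t A p) (matchStep s t A' q) := by
  obtain ⟨a, b, ca, cb⟩ := p
  obtain ⟨a', b', ca', cb'⟩ := q
  obtain ⟨hanti, hle, hca, hcb⟩ := h
  dsimp only at hanti hle hca hcb
  have aMove_of_aMove (heq : a = a') (hp : ca < s ∧ (t ≤ cb ∨ A a b)) :
      ca' < s ∧ (t ≤ cb' ∨ A' a' b') := by
    obtain rfl : b = b' := by omega
    subst heq
    exact ⟨(hca rfl).trans_lt hp.1, hp.2.imp (·.trans (hcb rfl)) (hA a b)⟩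
  unfold matchStep
  dsimp only
  split_ifs with hp hq hq
  · constructor <;> dsimp only <;> omega
  · have hne : a ≠ a' := fun heq => hq (aMove_of_aMove heq hp)
    constructor <;> dsimp only <;> omega
  · constructor <;> dsimp only <;> omega
  · constructor <;> dsimp only <;> omega

theorem matchStep_fst_le (A : ℕ → ℕ → Bool) (p : ℕ × ℕ × ℕ × ℕ) :
    (matchStep s t A p).1 ≤ p.1 + 1 := by
  rw [matchStep]
  split_ifs <;> simp

theorem matchStep_snd_fst_le (A : ℕ → ℕ → Bool) (p : ℕ × ℕ × ℕ × ℕ) :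
    (matchStep s t A p).2.1 ≤ p.2.1 + 1 := by
  rw [matchStep]
  split_ifs <;> simp

theorem mRun_of_eq_length (h : p.1 = X.length ∨ p.2.1 = Y.length) (fuel : ℕ) :
    mRun s t S X Y fuel p = (p.1, p.2.1) := by
  cases fuel with
  | zero => rfl
  | succ fuel => exact if_pos h

theorem mRun_succ_of_ne_length (hX : p.1 ≠ X.length) (hY : p.2.1 ≠ Y.length) (fuel : ℕ) :
    mRun s t S X Y (fuel + 1) p = mRun s t S X Y fuel (matchStep s t (typeA S X Y) p) := by
  obtain ⟨a, b, ca, cb⟩ := p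
  rw [mRun, if_neg (not_or.2 ⟨hX, hY⟩), matchStep]
  split_ifs <;> rfl

theorem IsAhead.mRun_fst_eq_length (hlen : X'.length = X.length)
    (hA : ∀ a b, typeA S X Y a b → typeA S' X' Y a b) (fuel : ℕ) (h : IsAhead p q)
    (hq : q.1 ≤ X.length) (hp : p.2.1 ≤ Y.length)
    (hrun : (mRun s t S X Y fuel p).1 = X.length) :
    (mRun s t S' X' Y fuel q).1 = X.length := by
  induction fuel generalizing p q with
  | zero => exact hq.antisymm (hrun.ge.trans h.fst_le)
  | succ fuel ih =>
    have hle := h.fst_le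
    have hanti := h.antidiagonal
    by_cases hqX : q.1 = X.length
    · rw [mRun_of_eq_length (Or.inl (hqX.trans hlen.symm)), hqX]
    have hpX : p.1 ≠ X.length := by omega
    have hpY : p.2.1 ≠ Y.length := fun hpY => by
      rw [mRun_of_eq_length (Or.inr hpY)] at hrun
      exact hpX hrun
    rw [mRun_succ_of_ne_length hpX hpY] at hrun
    rw [mRun_succ_of_ne_length (by omega) (by omega)]
    exact ih (h.step hA) ((matchStep_fst_le _ q).trans (by omega))
      ((matchStep_snd_fst_le _ p).trans (by omega)) hrun

theorem matchable.mono (hX : 1 ≤ X.length) (hY : 1 ≤ Y.length) (hlen : X'.length = X.length)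
    (hA : ∀ a b, typeA S X Y a b → typeA S' X' Y a b) (h : matchable s t S X Y) :
    matchable s t S' X' Y := by
  unfold matchable at h ⊢
  rw [hlen]
  exact (IsAhead.refl _).mRun_fst_eq_length hlen hA _ hX hY h

end Coupling

section Relabelling

open Finset

variable {A : Finset ℕ} {x K : ℕ}

/-- The permutation of `{1,…,K} ⊇ A` that maps `A` onto `{1,…,|A|}` and the rest onto
`{|A|+1,…,K}`, increasingly on each part: an element `x` outside `A` is sent to
`|A| + |{1,…,x} \ A|`, which is the size of a union. -/
def relabel (A : Finset ℕ) (x : ℕ) : ℕ :=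
  if x ∈ A then #(A ∩ Iic x) else #(A ∪ Icc 1 x)

theorem relabel_mem_Icc_card (hx : x ∈ A) : relabel A x ∈ Icc 1 #A := by
  rw [relabel, if_pos hx, mem_Icc]
  exact ⟨card_pos.2 ⟨x, by simp [hx]⟩, card_le_card inter_subset_left⟩

theorem le_relabel (hx : x ∉ A) : x ≤ relabel A x := by
  rw [relabel, if_neg hx]
  calc x = #(Icc 1 x) := by simp
    _ ≤ #(A ∪ Icc 1 x) := card_le_card subset_union_right

theorem card_lt_relabel (hx : x ∉ A) (h1 : 1 ≤ x) : #A < relabel A x := by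
  rw [relabel, if_neg hx]
  exact card_lt_card (ssubset_iff_of_subset subset_union_left |>.2 ⟨x, by simp [h1], hx⟩)

theorem relabel_mem_Icc (hA : A ⊆ Icc 1 K) (hx : x ∈ Icc 1 K) : relabel A x ∈ Icc 1 K := by
  have card_le {B : Finset ℕ} (hB : B ⊆ Icc 1 K) : #B ≤ K := by simpa using card_le_card hB
  by_cases hxA : x ∈ A
  · exact Icc_subset_Icc_right (card_le hA) (relabel_mem_Icc_card hxA)
  · rw [mem_Icc] at hx ⊢
    refine ⟨hx.1.trans (le_relabel hxA), ?_⟩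
    rw [relabel, if_neg hxA]
    exact card_le (union_subset hA (Icc_subset_Icc_right hx.2))

theorem strictMonoOn_relabel (A : Finset ℕ) : StrictMonoOn (relabel A) A := by
  intro x hx y hy hxy
  rw [mem_coe] at hx hy
  rw [relabel, relabel, if_pos hx, if_pos hy]
  refine card_lt_card (ssubset_iff_of_subset ?_ |>.2 ⟨y, by simp [hy], by simp [hxy]⟩)
  exact inter_subset_inter_left (Iic_subset_Iic.2 hxy.le)

theorem strictMonoOn_relabel_compl (A : Finset ℕ) : StrictMonoOn (relabel A) (A : Set ℕ)ᶜ := by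
  intro x hx y hy hxy
  rw [Set.mem_compl_iff, mem_coe] at hx hy
  rw [relabel, relabel, if_neg hx, if_neg hy]
  refine card_lt_card (ssubset_iff_of_subset ?_ |>.2 ⟨y, ?_, ?_⟩)
  · exact union_subset_union_right (Icc_subset_Icc_right hxy.le)
  · simp [Nat.one_le_of_lt hxy]
  · simp [hy, hxy]

theorem injOn_relabel (A : Finset ℕ) : Set.InjOn (relabel A) (Set.Ici 1) := by
  have ne_of_mem_of_notMem {x y : ℕ} (hx : x ∈ A) (hy : y ∉ A) (h1 : 1 ≤ y) :
      relabel A x ≠ relabel A y :=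
    ((mem_Icc.1 (relabel_mem_Icc_card hx)).2.trans_lt (card_lt_relabel hy h1)).ne
  intro x hx y hy hxy
  by_cases hxA : x ∈ A <;> by_cases hyA : y ∈ A
  · exact (strictMonoOn_relabel A).injOn hxA hyA hxy
  · exact absurd hxy (ne_of_mem_of_notMem hxA hyA hy)
  · exact absurd hxy.symm (ne_of_mem_of_notMem hyA hxA hx)
  · exact (strictMonoOn_relabel_compl A).injOn hxA hyA hxy

theorem typeA_relabel {m : ℕ} {S : Fin m → Finset ℕ} {X : Fin m → ℕ} {Y : List ℕ} {a b : ℕ}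
    (h : typeA (List.ofFn S) (List.ofFn X) Y a b) :
    typeA (List.ofFn fun i => Icc 1 #(S i)) (List.ofFn fun i => relabel (S i) (X i)) Y a b := by
  by_cases ha : a - 1 < m
  · simp only [typeA, decide_eq_true_eq, List.getD_eq_getElem?_getD, List.getElem?_ofFn, ha,
      dite_true, Option.getD_some] at h ⊢
    by_cases hmem : X ⟨a - 1, ha⟩ ∈ S ⟨a - 1, ha⟩
    · exact Or.inl (relabel_mem_Icc_card hmem)
    · exact Or.inr ((h.resolve_left hmem).trans (le_relabel hmem))
  · simpa [typeA, ha] using h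

end Relabelling

theorem worst_sets_are_initial_segments_general {s t m : ℕ} (hm : 1 ≤ m) (K : Fin m → ℕ)
    {Y : List ℕ} (hY : 1 ≤ Y.length) {S : Fin m → Finset ℕ}
    (hS : ∀ i, S i ⊆ Finset.Icc 1 (K i)) :
    ((Fintype.piFinset fun i => Finset.Icc 1 (K i)).filter
        (fun X => matchable s t (List.ofFn S) (List.ofFn X) Y)).card ≤
    ((Fintype.piFinset fun i => Finset.Icc 1 (K i)).filter
        (fun X => matchable s t (List.ofFn fun i => Finset.Icc 1 (S i).card)
          (List.ofFn X) Y)).card := by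
  refine Finset.card_le_card_of_injOn (fun X i => relabel (S i) (X i)) ?_ ?_
  · intro X hX
    rw [Finset.mem_coe, Finset.mem_filter, Fintype.mem_piFinset] at hX ⊢
    exact ⟨fun i => relabel_mem_Icc (hS i) (hX.1 i),
      hX.2.mono (by simpa using hm) hY (by simp) fun _ _ => typeA_relabel⟩
  · intro X hX X' hX' h
    rw [Finset.mem_coe, Finset.mem_filter, Fintype.mem_piFinset] at hX hX'
    funext i
    exact injOn_relabel (S i) (Finset.mem_Icc.1 (hX.1 i)).1 (Finset.mem_Icc.1 (hX'.1 i)).1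
      (congrFun h i)

/-- The choice `S_1 = ⋯ = S_m = {1,…,λ−1}` is the worst: for every `Y` and every
choice of size-`(λ−1)` sets `S_1,…,S_m`, the number of `X ∈ [K]^m` matchable in `Y`
with respect to `S_1,…,S_m` is at most the number matchable with respect to
`[λ−1],…,[λ−1]`. -/
theorem worst_sets_are_initial_segments (K lam s t m n : ℕ)
    (hK : 1 ≤ K) (hlam : 1 ≤ lam) (hlamK : lam - 1 ≤ K)
    (hs : 0 < s) (ht : 0 < t) (hm : 1 ≤ m) (hn : 1 ≤ n)
    (Y : List ℕ) (hYlen : Y.length = n) (hYmem : ∀ v ∈ Y, v ∈ Finset.Icc 1 K)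
    (S : List (Finset ℕ)) (hSlen : S.length = m)
    (hS : ∀ A ∈ S, A ⊆ Finset.Icc 1 K ∧ A.card = lam - 1) :
    ((Fintype.piFinset (fun _ : Fin m => Finset.Icc 1 K)).filter
        (fun X => matchable s t S (List.ofFn X) Y)).card ≤
    ((Fintype.piFinset (fun _ : Fin m => Finset.Icc 1 K)).filter
        (fun X => matchable s t (List.replicate m (Finset.Icc 1 (lam - 1)))
          (List.ofFn X) Y)).card := by
  subst hSlen hYlen
  have hcard : (List.ofFn fun i => Finset.Icc 1 (S.get i).card) =
      List.replicate S.length (Finset.Icc 1 (lam - 1)) := by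
    simp only [(hS _ (S.get_mem _)).2, List.ofFn_const]
  simpa only [List.ofFn_get, hcard] using
    worst_sets_are_initial_segments_general (s := s) (t := t) hm (fun _ => K) hn
      fun i => (hS _ (S.get_mem i)).1
end
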